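/- arXiv:2005.00772 — 6 statements merged into one kernel-verified Lean document; each statement's English description precedes it below -/
import Mathlib

section
/- For all natural numbers n and λ, the alternating convolution ∑_{k=0}^{n} (−1)^k · binom(n,k) · C_{k+λ} · C_{n−k+λ} equals (λ! · χ(n even) / (n+2)_λ) · binom(2λ, λ) · binom(n, ⌊n/2⌋) · C_{λ+⌊n/2⌋}, where the identity is an equality of rational numbers (the sum vanishes when n is odd). -/
/-- Rational Pochhammer symbol: `(x)_0 = 1`, `(x)_n = x(x+1)⋯(x+n-1)`. -/
def pochQ (x : ℚ) (n : ℕ) : ℚ := ∏ i ∈ Finset.range n, (x + i)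

/-!
Since `C_{k+l} = C_l 4^k (l + 1/2)_k / (l + 2)_k`, the alternating convolution is, up to scaling, a
coefficient of `₁F₁(a; b; X) ₁F₁(a; b; -X)` with `a = l + 1/2` and `b = l + 2`. For `f` and `g`
solving Kummer's equation with arguments `X` and `-X`, the product `f g`, the Wronskian
`(θ f) g - f (θ g)` and `(θ f) (θ g)` satisfy a first-order linear system in `θ = X d/dX`.
Eliminating the last two gives a two-step recurrence for the coefficients of `f g`, whose solution
is the Ramanujan–Preece formula
`₁F₁(a; b; X) ₁F₁(a; b; -X) = ₂F₃(a, b - a; b, b/2, (b+1)/2; X²/4)`.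
-/

open Finset PowerSeries

section KummerEquation

variable {R A : Type*} [CommSemiring R] [CommRing A] [Algebra R A]

/-- Kummer's confluent hypergeometric equation `θ (θ + b - 1) f = x (θ + a) f`, for a derivation
`θ`. With `θ = X d/dX` and `x = c X` it is the equation of `₁F₁(a; b; c X)`. -/
def IsKummerSolution (θ : Derivation R A A) (a b x f : A) : Prop :=
  θ (θ f) + (b - 1) * θ f = x * (θ f + a * f)

namespace IsKummerSolution

variable {θ : Derivation R A A} {a b x f g : A}

theorem apply_apply_mul (hf : IsKummerSolution θ a b x f) (hg : IsKummerSolution θ a b (-x) g) :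
    θ (θ (f * g)) + (b - 1) * θ (f * g) = x * (θ f * g - f * θ g) + 2 * (θ f * θ g) := by
  unfold IsKummerSolution at hf hg
  simp only [Derivation.leibniz, smul_eq_mul, map_add]
  linear_combination g * hf + f * hg

theorem apply_wronskian (hf : IsKummerSolution θ a b x f) (hg : IsKummerSolution θ a b (-x) g) :
    θ (θ f * g - f * θ g) + (b - 1) * (θ f * g - f * θ g) =
      x * (θ (f * g) + 2 * a * (f * g)) := by
  unfold IsKummerSolution at hf hg
  simp only [Derivation.leibniz, smul_eq_mul, map_sub]
  linear_combination g * hf - f * hg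

theorem apply_mul_apply (hf : IsKummerSolution θ a b x f) (hg : IsKummerSolution θ a b (-x) g) :
    θ (θ f * θ g) + 2 * (b - 1) * (θ f * θ g) = -(a * (x * (θ f * g - f * θ g))) := by
  unfold IsKummerSolution at hf hg
  simp only [Derivation.leibniz, smul_eq_mul]
  linear_combination θ g * hf + θ f * hg

end IsKummerSolution

end KummerEquation

section EulerOperator

variable {R : Type*} [CommRing R]

variable (R) in
/-- The Euler operator `θ = X d/dX` on formal power series. -/
noncomputable def eulerOperator : Derivation R R⟦X⟧ R⟦X⟧ := (X : R⟦X⟧) • derivative R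

theorem coeff_eulerOperator (f : R⟦X⟧) (n : ℕ) :
    coeff n (eulerOperator R f) = n * coeff n f := by
  cases n with
  | zero => simp [eulerOperator]
  | succ n => simp [eulerOperator, coeff_succ_X_mul, coeff_derivative, mul_comm]

theorem isKummerSolution_eulerOperator_of_coeff_succ {a b c : R} {f : R⟦X⟧}
    (h : ∀ k : ℕ, (k + 1) * (b + k) * coeff (k + 1) f = c * (a + k) * coeff k f) :
    IsKummerSolution (eulerOperator R) (C a) (C b) (C c * X) f := by
  unfold IsKummerSolution
  ext n
  rw [← map_one C, ← map_sub, mul_assoc, map_add, coeff_C_mul, coeff_C_mul]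
  simp only [coeff_eulerOperator]
  cases n with
  | zero => simp
  | succ n =>
    simp only [coeff_succ_X_mul, map_add, coeff_C_mul, coeff_eulerOperator]
    push_cast
    linear_combination h n

theorem IsKummerSolution.coeff_add_two_mul {a b : R} {f g : R⟦X⟧}
    (hf : IsKummerSolution (eulerOperator R) (C a) (C b) X f)
    (hg : IsKummerSolution (eulerOperator R) (C a) (C b) (-X) g) (n : ℕ) :
    (n + 2) * (n + b) * (n + b + 1) * (n + 2 * b) * coeff (n + 2) (f * g) =
      (n + 2 * a) * (n + 2 * b - 2 * a) * coeff n (f * g) := by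
  have hP := congrArg (coeff (n + 2)) (hf.apply_apply_mul hg)
  have hW := congrArg (coeff (n + 1)) (hf.apply_wronskian hg)
  have hE := congrArg (coeff (n + 2)) (hf.apply_mul_apply hg)
  generalize f * g = P at *
  generalize eulerOperator R f * g - f * eulerOperator R g = W at *
  generalize eulerOperator R f * eulerOperator R g = E at *
  rw [show (2 : R⟦X⟧) = C 2 from (map_ofNat C 2).symm, ← map_one C, ← map_sub] at hP hW hE
  simp only [map_add, map_neg, mul_assoc, coeff_C_mul, coeff_succ_X_mul, coeff_eulerOperator]
    at hP hW hE
  push_cast at hP hW hE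
  linear_combination (n + b) * (n + 2 * b) * hP + (n + 2 * b - 2 * a) * hW + 2 * (n + b) * hE

end EulerOperator

section KummerSeries

variable {K : Type*} [Field K]

/-- The confluent hypergeometric series `₁F₁(a; b; X) = ∑ (a)_k / ((b)_k k!) X^k`. If `b` is a
nonpositive integer, the coefficients with vanishing denominator are `0`. -/
noncomputable def kummerSeries (a b : K) : K⟦X⟧ :=
  .mk fun k ↦ (ascPochhammer K k).eval a / (ascPochhammer K k).eval b / k.factorial

theorem ascPochhammer_eval_ne_zero {b : K} (hb : ∀ k : ℕ, b + k ≠ 0) (n : ℕ) :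
    (ascPochhammer K n).eval b ≠ 0 := by
  rw [Ne, ascPochhammer_eval_eq_zero_iff]
  rintro ⟨k, -, hk⟩
  exact hb k (by rw [hk, add_neg_cancel])

variable [CharZero K] {b : K}

theorem coeff_succ_kummerSeries (a : K) (hb : ∀ k : ℕ, b + k ≠ 0) (k : ℕ) :
    (k + 1) * (b + k) * coeff (k + 1) (kummerSeries a b) =
      (a + k) * coeff k (kummerSeries a b) := by
  have hbk := hb k
  have hpoch := ascPochhammer_eval_ne_zero hb k
  simp only [kummerSeries, coeff_mk, ascPochhammer_succ_eval, Nat.factorial_succ]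
  push_cast
  field

theorem isKummerSolution_rescale_kummerSeries (a c : K) (hb : ∀ k : ℕ, b + k ≠ 0) :
    IsKummerSolution (eulerOperator K) (C a) (C b) (C c * X) (rescale c (kummerSeries a b)) := by
  refine isKummerSolution_eulerOperator_of_coeff_succ fun k ↦ ?_
  rw [coeff_rescale, coeff_rescale]
  linear_combination c ^ (k + 1) * coeff_succ_kummerSeries a hb k

theorem mul_coeff_two_mul_succ_kummerSeries_mul_rescale_neg_one (a : K)
    (hb : ∀ k : ℕ, b + k ≠ 0) (m : ℕ) :
    (m + 1) * (b + m) * (b + 2 * m) * (b + 2 * m + 1) *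
        coeff (2 * (m + 1)) (kummerSeries a b * rescale (-1) (kummerSeries a b)) =
      (a + m) * (b - a + m) *
        coeff (2 * m) (kummerSeries a b * rescale (-1) (kummerSeries a b)) := by
  have hf := isKummerSolution_rescale_kummerSeries a 1 hb
  have hg := isKummerSolution_rescale_kummerSeries a (-1) hb
  simp only [map_one, map_neg, one_mul, neg_mul, rescale_one, RingHom.id_apply] at hf hg
  have hrec := hf.coeff_add_two_mul hg (2 * m)
  push_cast at hrec
  rw [mul_add_one]
  linear_combination hrec / 4

theorem coeff_two_mul_kummerSeries_mul_rescale_neg_one (a : K) (hb : ∀ k : ℕ, b + k ≠ 0)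
    (m : ℕ) :
    coeff (2 * m) (kummerSeries a b * rescale (-1) (kummerSeries a b)) *
        (m.factorial * (ascPochhammer K m).eval b * (ascPochhammer K (2 * m)).eval b) =
      (ascPochhammer K m).eval a * (ascPochhammer K m).eval (b - a) := by
  induction m with
  | zero => simp [coeff_mul, coeff_rescale, kummerSeries, -coeff_zero_eq_constantCoeff]
  | succ m ih =>
    have hrec := mul_coeff_two_mul_succ_kummerSeries_mul_rescale_neg_one a hb m
    simp only [mul_add_one, Nat.factorial_succ, ascPochhammer_succ_eval] at hrec ⊢
    push_cast at hrec ⊢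
    linear_combination (m.factorial * (ascPochhammer K m).eval b *
      (ascPochhammer K (2 * m)).eval b) * hrec + (a + m) * (b - a + m) * ih

theorem sum_neg_one_pow_mul_choose_eq_coeff (u : ℕ → K) (n : ℕ) :
    ∑ k ∈ range (n + 1), (-1) ^ k * n.choose k * u k * u (n - k) =
      n.factorial * coeff n ((.mk fun k ↦ u k / k.factorial) *
        rescale (-1) (.mk fun k ↦ u k / k.factorial)) := by
  rw [mul_comm (PowerSeries.mk _), coeff_mul, Nat.sum_antidiagonal_eq_sum_range_succ_mk, mul_sum]
  refine sum_congr rfl fun k hk ↦ ?_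
  rw [Nat.cast_choose K (mem_range_succ_iff.mp hk), coeff_rescale, coeff_mk, coeff_mk]
  field

theorem sum_neg_one_pow_mul_choose_two_mul_mul_ascPochhammer_div (a : K)
    (hb : ∀ k : ℕ, b + k ≠ 0) (m : ℕ) :
    ∑ k ∈ range (2 * m + 1), (-1) ^ k * (2 * m).choose k *
        ((ascPochhammer K k).eval a / (ascPochhammer K k).eval b) *
        ((ascPochhammer K (2 * m - k)).eval a / (ascPochhammer K (2 * m - k)).eval b) =
      (2 * m).factorial * ((ascPochhammer K m).eval a * (ascPochhammer K m).eval (b - a) /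
        (m.factorial * (ascPochhammer K m).eval b * (ascPochhammer K (2 * m)).eval b)) := by
  rw [sum_neg_one_pow_mul_choose_eq_coeff
    fun k ↦ (ascPochhammer K k).eval a / (ascPochhammer K k).eval b]
  have hden : m.factorial * (ascPochhammer K m).eval b * (ascPochhammer K (2 * m)).eval b ≠ 0 :=
    mul_ne_zero (mul_ne_zero (mod_cast m.factorial_ne_zero) (ascPochhammer_eval_ne_zero hb m))
      (ascPochhammer_eval_ne_zero hb (2 * m))
  exact congrArg _ (eq_div_of_mul_eq hden
    (coeff_two_mul_kummerSeries_mul_rescale_neg_one a hb m))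

end KummerSeries

theorem sum_neg_one_pow_mul_choose_eq_zero_of_odd {R : Type*} [CommRing R] [IsAddTorsionFree R]
    (u : ℕ → R) {n : ℕ} (hn : Odd n) :
    ∑ k ∈ range (n + 1), (-1) ^ k * n.choose k * u k * u (n - k) = 0 := by
  rw [← self_eq_neg, ← sum_neg_distrib, ← sum_flip]
  refine sum_congr rfl fun k hk ↦ ?_
  have hk : k ≤ n := mem_range_succ_iff.mp hk
  have hsign : (-1 : R) ^ (n - k) * (-1) ^ k = -1 := by rw [pow_sub_mul_pow _ hk, hn.neg_one_pow]
  have hsq : (-1 : R) ^ k * (-1) ^ k = 1 := by rw [← mul_pow, neg_one_mul, neg_neg, one_pow]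
  rw [Nat.choose_symm hk, Nat.sub_sub_self hk]
  linear_combination n.choose k * u k * u (n - k) * ((-1) ^ k * hsign - (-1) ^ (n - k) * hsq)

section Catalan

variable {K : Type*} [Field K] [CharZero K]

theorem succ_succ_mul_catalan_succ (n : ℕ) :
    (n + 2) * catalan (n + 1) = 2 * (2 * n + 1) * catalan n := by
  apply mul_left_cancel₀ n.add_one_ne_zero
  have hn := succ_mul_catalan_eq_centralBinom n
  have hn' := succ_mul_catalan_eq_centralBinom (n + 1)
  have hbinom := n.succ_mul_centralBinom_succ
  rw [← hn, ← hn'] at hbinom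
  linear_combination hbinom

theorem natCast_add_two_add_natCast_ne_zero (l k : ℕ) : (l + 2 + k : K) ≠ 0 :=
  mod_cast (by lia : l + 2 + k ≠ 0)

theorem catalan_add_eq_ascPochhammer_div (k l : ℕ) :
    (catalan (k + l) : K) = catalan l * 4 ^ k *
      ((ascPochhammer K k).eval (l + 1 / 2 : K) / (ascPochhammer K k).eval (l + 2 : K)) := by
  induction k with
  | zero => simp
  | succ k ih =>
    have hrec : ((k + l : ℕ) + 2 : K) * catalan (k + l + 1) =
        2 * (2 * (k + l : ℕ) + 1) * catalan (k + l) := mod_cast succ_succ_mul_catalan_succ (k + l)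
    have hden := natCast_add_two_add_natCast_ne_zero (K := K) l k
    have hpoch := ascPochhammer_eval_ne_zero (natCast_add_two_add_natCast_ne_zero (K := K) l) k
    rw [add_right_comm, ascPochhammer_succ_eval, ascPochhammer_succ_eval]
    apply mul_left_cancel₀ hden
    push_cast at hrec
    rw [ih] at hrec
    field_simp at hrec ⊢
    linear_combination 2 * hrec

theorem four_pow_mul_factorial_mul_ascPochhammer_three_halves (m : ℕ) :
    4 ^ m * m.factorial * (ascPochhammer K m).eval (3 / 2) = (2 * m + 1).factorial := by
  induction m with
  | zero => simp
  | succ m ih =>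
    simp only [mul_add_one, ascPochhammer_succ_eval, Nat.factorial_succ] at ih ⊢
    push_cast at ih ⊢
    linear_combination (2 * m + 2) * (2 * m + 3) * ih

theorem factorial_mul_choose_two_mul_eq_factorial_mul_catalan (l : ℕ) :
    l.factorial * (2 * l).choose l = (l + 1).factorial * catalan l := by
  rw [← Nat.centralBinom_eq_two_mul_choose, ← succ_mul_catalan_eq_centralBinom, Nat.factorial_succ]
  ring

theorem factorial_div_ascPochhammer_two_mul_add_two (m l : ℕ) :
    (l + 1).factorial / (ascPochhammer K l).eval (2 * m + 2 : K) =
      4 ^ m * m.factorial * (ascPochhammer K m).eval (3 / 2) /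
        (ascPochhammer K (2 * m)).eval (l + 2 : K) := by
  have hm : (ascPochhammer K l).eval (2 * m + 2 : K) ≠ 0 :=
    mod_cast ascPochhammer_eval_ne_zero (natCast_add_two_add_natCast_ne_zero (K := K) (2 * m)) l
  have hl : (ascPochhammer K (2 * m)).eval (l + 2 : K) ≠ 0 :=
    ascPochhammer_eval_ne_zero (natCast_add_two_add_natCast_ne_zero l) (2 * m)
  have hleft := factorial_mul_ascPochhammer K (l + 1) (2 * m)
  have hright := factorial_mul_ascPochhammer K (2 * m + 1) l
  push_cast [add_assoc, one_add_one_eq_two] at hleft hright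
  rw [div_eq_div_iff hm hl, four_pow_mul_factorial_mul_ascPochhammer_three_halves, hleft, hright]
  congr 2
  ring

theorem sum_neg_one_pow_mul_choose_two_mul_mul_catalan (m l : ℕ) :
    ∑ k ∈ range (2 * m + 1),
        (-1) ^ k * ((2 * m).choose k : K) * catalan (k + l) * catalan (2 * m - k + l) =
      (l + 1).factorial * catalan l / (ascPochhammer K l).eval (2 * m + 2 : K) *
        (2 * m).choose m * catalan (l + m) := by
  calc
    _ = catalan l ^ 2 * 4 ^ (2 * m) * ∑ k ∈ range (2 * m + 1), (-1) ^ k * (2 * m).choose k *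
        ((ascPochhammer K k).eval (l + 1 / 2 : K) / (ascPochhammer K k).eval (l + 2 : K)) *
        ((ascPochhammer K (2 * m - k)).eval (l + 1 / 2 : K) /
          (ascPochhammer K (2 * m - k)).eval (l + 2 : K)) := by
      rw [mul_sum]
      refine sum_congr rfl fun k hk ↦ ?_
      rw [catalan_add_eq_ascPochhammer_div, catalan_add_eq_ascPochhammer_div,
        ← pow_mul_pow_sub 4 (mem_range_succ_iff.mp hk)]
      ring
    _ = catalan l ^ 2 * 4 ^ (2 * m) * ((2 * m).factorial *
        ((ascPochhammer K m).eval (l + 1 / 2 : K) * (ascPochhammer K m).eval (3 / 2) /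
          (m.factorial * (ascPochhammer K m).eval (l + 2 : K) *
            (ascPochhammer K (2 * m)).eval (l + 2 : K)))) := by
      rw [sum_neg_one_pow_mul_choose_two_mul_mul_ascPochhammer_div _
          (natCast_add_two_add_natCast_ne_zero l),
        show (l + 2 - (l + 1 / 2) : K) = 3 / 2 by ring]
    _ = _ := by
      rw [two_mul m, Nat.cast_add_choose, ← two_mul m, add_comm l m,
        catalan_add_eq_ascPochhammer_div, mul_div_right_comm (Nat.cast (l + 1).factorial),
        factorial_div_ascPochhammer_two_mul_add_two]
      field

end Catalan

theorem pochQ_eq_eval_ascPochhammer (x : ℚ) (n : ℕ) : pochQ x n = (ascPochhammer ℚ n).eval x := by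
  induction n with
  | zero => simp [pochQ]
  | succ n ih => rw [ascPochhammer_succ_eval, ← ih, pochQ, prod_range_succ, pochQ]

/-- Theorem A: alternating convolution of shifted Catalan numbers. -/
theorem stmt_0 (n lam : ℕ) :
    ∑ k ∈ Finset.range (n + 1),
        (-1 : ℚ) ^ k * (n.choose k : ℚ) * (catalan (k + lam) : ℚ) * (catalan (n - k + lam) : ℚ)
      = ((lam.factorial : ℚ) * (if Even n then 1 else 0) / pochQ ((n : ℚ) + 2) lam)
          * ((2 * lam).choose lam : ℚ) * (n.choose (n / 2) : ℚ) * (catalan (lam + n / 2) : ℚ) := by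
  obtain ⟨m, rfl | rfl⟩ := n.even_or_odd'
  · rw [if_pos (even_two_mul m), Nat.mul_div_cancel_left m two_pos, pochQ_eq_eval_ascPochhammer,
      sum_neg_one_pow_mul_choose_two_mul_mul_catalan]
    have hbinom : (lam.factorial : ℚ) * (2 * lam).choose lam = (lam + 1).factorial * catalan lam :=
      mod_cast factorial_mul_choose_two_mul_eq_factorial_mul_catalan lam
    rw [← hbinom]
    push_cast
    ring
  · rw [sum_neg_one_pow_mul_choose_eq_zero_of_odd (fun k ↦ (catalan (k + lam) : ℚ))
      (odd_two_mul_add_one m), if_neg (Nat.not_even_two_mul_add_one m)]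
    ring
end

section
/- For all natural numbers n and λ, ∑_{k=0}^{n} (−1)^k · binom(n,k) · binom(2n−2k+2λ, n−k+λ) · C_{k+λ} equals (λ! / (n+2)_λ) · binom(2λ, λ) · binom(n, ⌊n/2⌋) · binom(n+2λ, λ+⌊n/2⌋), as an equality of rational numbers. -/
/-!
Let `X`, `Y` be independent with moments `E[X ^ k] = E[Y ^ k] = centralBinom k` (the arcsine law on
`[0, 4]`). Since `2 * catalan k = E[Y ^ k * (4 - Y)]`, the sum is
`E[(X - Y) ^ n * (X * Y) ^ l * (4 - Y)] / 2`. Swapping `X` and `Y` expresses it through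
`T m = E[(X - Y) ^ (2 * m) * (X * Y) ^ l]`: for odd `n = 2 * m + 1` it is `T (m + 1) / 4`, and for
even `n = 2 * m` an integration by parts makes it a rational multiple of `T m`. The numbers `T m`
are two-dimensional Selberg integrals; integration by parts relates `T (m + 1)` to `T m`, as in
Aomoto's proof of Selberg's formula.
-/

open Finset

section DiffMoment

variable {R : Type*} [CommRing R]

/-- The mixed moment `E[(X - Y) ^ n * X ^ p * Y ^ q]` of two formal independent variables `X`, `Y`
with common moment sequence `u`. The first component of `ij` is the exponent of `Y` in the
expansion of `(X - Y) ^ n`. -/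
def diffMoment (u : ℕ → R) (n p q : ℕ) : R :=
  ∑ ij ∈ antidiagonal n, n.choose ij.1 * ((-1) ^ ij.1 * u (ij.2 + p) * u (ij.1 + q))

lemma diffMoment_zero (u : ℕ → R) (p q : ℕ) : diffMoment u 0 p q = u p * u q := by
  simp [diffMoment]

lemma diffMoment_succ (u : ℕ → R) (n p q : ℕ) :
    diffMoment u (n + 1) p q = diffMoment u n (p + 1) q - diffMoment u n p (q + 1) := by
  unfold diffMoment
  rw [sum_antidiagonal_choose_succ_mul fun i j ↦ (-1) ^ i * u (j + p) * u (i + q),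
    sub_eq_add_neg, ← sum_neg_distrib]
  congr 1 <;> refine sum_congr rfl fun ij hij ↦ ?_
  · rw [add_right_comm, add_assoc]
  · rw [Nat.choose_symm_of_eq_add (mem_antidiagonal.1 hij).symm, add_right_comm, add_assoc]
    ring

lemma diffMoment_swap (u : ℕ → R) (n p q : ℕ) :
    diffMoment u n p q = (-1) ^ n * diffMoment u n q p := by
  induction n generalizing p q with
  | zero => simp only [diffMoment_zero]; ring
  | succ n ih =>
    rw [diffMoment_succ, diffMoment_succ, ih (p + 1), ih p]
    ring

lemma diffMoment_even_swap (u : ℕ → R) (m p q : ℕ) :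
    diffMoment u (2 * m) p q = diffMoment u (2 * m) q p := by
  rw [diffMoment_swap, (even_two_mul m).neg_one_pow, one_mul]

lemma diffMoment_odd_swap (u : ℕ → R) (m p q : ℕ) :
    diffMoment u (2 * m + 1) p q = -diffMoment u (2 * m + 1) q p := by
  rw [diffMoment_swap, (odd_two_mul_add_one m).neg_one_pow, neg_one_mul]

lemma two_mul_diffMoment_odd_succ_left (u : ℕ → R) (m l : ℕ) :
    2 * diffMoment u (2 * m + 1) (l + 1) l = diffMoment u (2 * m + 1 + 1) l l := by
  linear_combination -diffMoment_succ u (2 * m + 1) l l + diffMoment_odd_swap u m l (l + 1)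

lemma diffMoment_two_mul_succ_diag (u : ℕ → R) (m l : ℕ) :
    diffMoment u (2 * (m + 1)) l l
      = 2 * (diffMoment u (2 * m) (l + 2) l - diffMoment u (2 * m) (l + 1) (l + 1)) := by
  rw [show 2 * (m + 1) = 2 * m + 1 + 1 by ring]
  linear_combination -two_mul_diffMoment_odd_succ_left u m l
    + 2 * diffMoment_succ u (2 * m) (l + 1) l

variable {u : ℕ → R} {a b c : R}

/- The recurrence on `u` says that `E[X * (c - X) * f'(X)] = E[(b * X - a) * f(X)]` for every
polynomial `f`; here `f(X) = X ^ p * (X - Y) ^ (n + 1)`. -/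
lemma diffMoment_integration_by_parts (hu : ∀ k : ℕ, (k + b) * u (k + 1) = (c * k + a) * u k)
    (n p q : ℕ) :
    (p + b) * diffMoment u (n + 1) (p + 1) q + (n + 1) * diffMoment u n (p + 2) q
      = (c * p + a) * diffMoment u (n + 1) p q + c * (n + 1) * diffMoment u n (p + 1) q := by
  induction n generalizing p q with
  | zero =>
    have hp := hu p
    have hp_succ := hu (p + 1)
    simp only [diffMoment_succ, diffMoment_zero]
    push_cast at hp_succ ⊢
    linear_combination u q * hp_succ - u (q + 1) * hp
  | succ n ih =>
    have hp_succ := ih (p + 1) q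
    have hq_succ := ih p (q + 1)
    rw [diffMoment_succ u (n + 1) (p + 1), diffMoment_succ u (n + 1) p]
    push_cast at hp_succ ⊢
    linear_combination hp_succ - hq_succ + (n + 1) * diffMoment_succ u n (p + 2) q
      - c * (n + 1) * diffMoment_succ u n (p + 1) q

lemma diffMoment_two_mul_succ_left (hu : ∀ k : ℕ, (k + b) * u (k + 1) = (c * k + a) * u k)
    (m l : ℕ) :
    (l + b + 2 * m) * diffMoment u (2 * m) (l + 1) l
      = (c * (l + m) + a) * diffMoment u (2 * m) l l := by
  cases m with
  | zero =>
    simp only [mul_zero, diffMoment_zero, Nat.cast_zero]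
    linear_combination u l * hu l
  | succ m =>
    have parts := diffMoment_integration_by_parts hu (2 * m + 1) l l
    rw [show 2 * (m + 1) = 2 * m + 1 + 1 by ring]
    push_cast at parts ⊢
    linear_combination parts + 2 * (m + 1) * diffMoment_succ u (2 * m + 1) (l + 1) l
      + c * (m + 1) * two_mul_diffMoment_odd_succ_left u m l
      - (m + 1) * diffMoment_odd_swap u m (l + 1) (l + 1)

lemma diffMoment_two_mul_succ_succ (hu : ∀ k : ℕ, (k + b) * u (k + 1) = (c * k + a) * u k)
    (m l : ℕ) :
    (l + b + m) * diffMoment u (2 * m) (l + 1) (l + 1)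
      = (c * l + a) * diffMoment u (2 * m) (l + 1) l := by
  rw [diffMoment_even_swap u m (l + 1) l]
  cases m with
  | zero =>
    simp only [mul_zero, diffMoment_zero, Nat.cast_zero]
    linear_combination u (l + 1) * hu l
  | succ m =>
    have parts := diffMoment_integration_by_parts hu (2 * m + 1) l (l + 1)
    rw [show 2 * (m + 1) = 2 * m + 1 + 1 by ring]
    push_cast at parts ⊢
    linear_combination parts - (m + 1) * two_mul_diffMoment_odd_succ_left u m (l + 1)
      + c * (m + 1) * diffMoment_odd_swap u m (l + 1) (l + 1)

lemma diffMoment_two_mul_add_two_left (hu : ∀ k : ℕ, (k + b) * u (k + 1) = (c * k + a) * u k)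
    (m l : ℕ) :
    (l + 1 + b + 2 * m) * diffMoment u (2 * m) (l + 2) l
      = (c * (l + 1 + 2 * m) + a) * diffMoment u (2 * m) (l + 1) l
        - m * diffMoment u (2 * m) (l + 1) (l + 1) := by
  cases m with
  | zero =>
    have hl_succ := hu (l + 1)
    simp only [mul_zero, diffMoment_zero]
    push_cast at hl_succ ⊢
    linear_combination u l * hl_succ
  | succ m =>
    have parts := diffMoment_integration_by_parts hu (2 * m + 1) (l + 1) l
    rw [show 2 * (m + 1) = 2 * m + 1 + 1 by ring]
    push_cast at parts ⊢
    linear_combination parts + 2 * (m + 1) * diffMoment_succ u (2 * m + 1) (l + 2) l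
      - 2 * c * (m + 1) * diffMoment_succ u (2 * m + 1) (l + 1) l
      - (m + 1) * two_mul_diffMoment_odd_succ_left u m (l + 1)
      + c * (m + 1) * diffMoment_odd_swap u m (l + 1) (l + 1)

theorem diffMoment_two_mul_diag_recurrence
    (hu : ∀ k : ℕ, (k + b) * u (k + 1) = (c * k + a) * u k) (m l : ℕ) :
    (l + b + m) * (l + b + 2 * m) * (l + b + 2 * m + 1) * diffMoment u (2 * (m + 1)) l l
      = 2 * (2 * m + 1) * (c * (b + m) - a) * (c * (l + m) + a) * diffMoment u (2 * m) l l := by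
  rw [diffMoment_two_mul_succ_diag]
  linear_combination
    2 * (l + b + m) * (l + b + 2 * m) * diffMoment_two_mul_add_two_left hu m l
      - 2 * (l + b + 2 * m) * (l + b + 3 * m + 1) * diffMoment_two_mul_succ_succ hu m l
      + 2 * (2 * m + 1) * (c * (b + m) - a) * diffMoment_two_mul_succ_left hu m l

end DiffMoment

section CentralBinom

/-- The central binomial coefficients as a rational sequence, the moments of the arcsine law on
`[0, 4]`. An abbreviation, so that lemmas about `Nat.centralBinom` apply directly. -/
abbrev centralBinomRat (k : ℕ) : ℚ := k.centralBinom

lemma centralBinomRat_succ (k : ℕ) :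
    (k + 1) * centralBinomRat (k + 1) = (4 * k + 2) * centralBinomRat k := by
  have h : ((k : ℚ) + 1) * (k + 1).centralBinom = 2 * (2 * k + 1) * k.centralBinom :=
    mod_cast k.succ_mul_centralBinom_succ
  linear_combination h

lemma catalan_eq_centralBinomRat_sub (k : ℕ) :
    (catalan k : ℚ) = 2 * centralBinomRat k - centralBinomRat (k + 1) / 2 := by
  have h : ((k : ℚ) + 1) * catalan k = centralBinomRat k :=
    mod_cast succ_mul_catalan_eq_centralBinom k
  refine mul_left_cancel₀ (by positivity : (k : ℚ) + 1 ≠ 0) ?_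
  linear_combination h + centralBinomRat_succ k / 2

lemma choose_two_mul_add_one_eq_centralBinomRat_div_two (m : ℕ) :
    ((2 * m + 1).choose m : ℚ) = centralBinomRat (m + 1) / 2 := by
  have h : (m + 1).centralBinom = 2 * (2 * m + 1).choose m := by
    rw [Nat.centralBinom_eq_two_mul_choose, mul_add_one, Nat.choose_succ_succ,
      Nat.choose_symm_half, ← two_mul]
  rw [centralBinomRat, h]
  push_cast
  ring

theorem diffMoment_centralBinomRat_diag (m l : ℕ) :
    diffMoment centralBinomRat (2 * m) l l
      = l.factorial * (2 * m).factorial / (2 * m + l).factorial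
        * (centralBinomRat l * centralBinomRat m * centralBinomRat (m + l)) := by
  induction m with
  | zero =>
    have h_zero : centralBinomRat 0 = 1 := by simp [centralBinomRat]
    simp only [mul_zero, zero_add, diffMoment_zero, Nat.factorial_zero, h_zero, Nat.cast_one]
    field_simp
  | succ m ih =>
    have recurrence := diffMoment_two_mul_diag_recurrence
      (u := centralBinomRat) (a := 2) (b := 1) (c := 4) centralBinomRat_succ m l
    have hm : centralBinomRat (m + 1) = (4 * m + 2) * centralBinomRat m / (m + 1) := by
      rw [eq_div_iff (by positivity), mul_comm, centralBinomRat_succ]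
    have hml : centralBinomRat (m + l + 1)
        = (4 * (m + l) + 2) * centralBinomRat (m + l) / (m + l + 1) := by
      rw [eq_div_iff (by positivity), mul_comm]
      exact mod_cast centralBinomRat_succ (m + l)
    have cancel : ((l : ℚ) + 1 + m) * (l + 1 + 2 * m) * (l + 1 + 2 * m + 1) ≠ 0 := by positivity
    apply mul_left_cancel₀ cancel
    rw [recurrence, ih, show 2 * (m + 1) + l = 2 * m + l + 1 + 1 by ring,
      show 2 * (m + 1) = 2 * m + 1 + 1 by ring, add_right_comm m 1 l, hm, hml]
    simp only [Nat.factorial_succ]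
    push_cast
    field_simp
    ring

lemma sum_choose_mul_catalan_eq_diffMoment (n l : ℕ) :
    ∑ k ∈ range (n + 1), (-1 : ℚ) ^ k * n.choose k
        * (2 * n - 2 * k + 2 * l).choose (n - k + l) * catalan (k + l)
      = 2 * diffMoment centralBinomRat n l l - diffMoment centralBinomRat n l (l + 1) / 2 := by
  simp only [diffMoment, Nat.sum_antidiagonal_eq_sum_range_succ_mk, mul_sum, sum_div,
    ← sum_sub_distrib]
  refine sum_congr rfl fun k _ ↦ ?_
  rw [catalan_eq_centralBinomRat_sub, ← Nat.mul_sub, ← mul_add,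
    ← Nat.centralBinom_eq_two_mul_choose, add_assoc k l 1]
  ring

lemma two_mul_diffMoment_centralBinomRat_sub_even (m l : ℕ) :
    2 * diffMoment centralBinomRat (2 * m) l l - diffMoment centralBinomRat (2 * m) l (l + 1) / 2
      = (2 * m + 1) / (2 * m + l + 1) * diffMoment centralBinomRat (2 * m) l l := by
  have h := diffMoment_two_mul_succ_left
    (u := centralBinomRat) (a := 2) (b := 1) (c := 4) centralBinomRat_succ m l
  rw [diffMoment_even_swap _ m l (l + 1)]
  field_simp
  linear_combination -h

lemma two_mul_diffMoment_centralBinomRat_sub_odd (m l : ℕ) :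
    2 * diffMoment centralBinomRat (2 * m + 1) l l
        - diffMoment centralBinomRat (2 * m + 1) l (l + 1) / 2
      = diffMoment centralBinomRat (2 * (m + 1)) l l / 4 := by
  rw [show 2 * (m + 1) = 2 * m + 1 + 1 by ring]
  linear_combination diffMoment_odd_swap centralBinomRat m l l
    - diffMoment_odd_swap centralBinomRat m l (l + 1) / 2
    + two_mul_diffMoment_odd_succ_left centralBinomRat m l / 4

end CentralBinom

lemma pochQ_natCast_add_two (n l : ℕ) :
    pochQ (n + 2) l = (n + 1 + l).factorial / (n + 1).factorial := by
  have h : pochQ (n + 2) l = (n + 1 + 1).ascFactorial l := by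
    simp [pochQ, Nat.ascFactorial_eq_prod_range, add_assoc, one_add_one_eq_two]
  rw [h, eq_div_iff (by positivity), mul_comm]
  exact mod_cast (n + 1).factorial_mul_ascFactorial l

/-- Theorem B: alternating convolution of central binomial coefficients with Catalan numbers. -/
theorem stmt_1 (n lam : ℕ) :
    ∑ k ∈ Finset.range (n + 1),
        (-1 : ℚ) ^ k * (n.choose k : ℚ) * ((2 * n - 2 * k + 2 * lam).choose (n - k + lam) : ℚ)
          * (catalan (k + lam) : ℚ)
      = ((lam.factorial : ℚ) / pochQ ((n : ℚ) + 2) lam)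
          * ((2 * lam).choose lam : ℚ) * (n.choose (n / 2) : ℚ)
          * ((n + 2 * lam).choose (lam + n / 2) : ℚ) := by
  rw [sum_choose_mul_catalan_eq_diffMoment, pochQ_natCast_add_two,
    ← Nat.centralBinom_eq_two_mul_choose]
  obtain ⟨m, rfl | rfl⟩ := n.even_or_odd'
  · rw [two_mul_diffMoment_centralBinomRat_sub_even, diffMoment_centralBinomRat_diag,
      show 2 * m / 2 = m by lia, show 2 * m + 2 * lam = 2 * (m + lam) by ring, add_comm lam m,
      ← Nat.centralBinom_eq_two_mul_choose, ← Nat.centralBinom_eq_two_mul_choose,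
      show 2 * m + 1 + lam = 2 * m + lam + 1 by ring, Nat.factorial_succ, Nat.factorial_succ]
    push_cast
    field_simp
  · rw [two_mul_diffMoment_centralBinomRat_sub_odd, diffMoment_centralBinomRat_diag,
      show (2 * m + 1) / 2 = m by lia, show 2 * m + 1 + 2 * lam = 2 * (m + lam) + 1 by ring,
      add_comm lam m, choose_two_mul_add_one_eq_centralBinomRat_div_two,
      choose_two_mul_add_one_eq_centralBinomRat_div_two,
      show 2 * (m + 1) = 2 * m + 1 + 1 by ring, show m + 1 + lam = m + lam + 1 by ring]
    field_simp
    ring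
end

section
/- For all natural numbers n and λ, ∑_{k=0}^{n} (−1)^k · binom(n,k) · binom(2k+2λ, k+λ) · binom(2n−2k+2λ, n−k+λ) equals (λ! · χ(n even) / (n+1)_λ) · binom(2λ, λ) · binom(n, ⌊n/2⌋) · binom(2λ+n, λ+⌊n/2⌋), as an equality of rational numbers (the sum vanishes when n is odd). -/
/-!
Multiplying two rising factorials gives
`(c)_a (c)_b = ∑ j, (-1)^j j! (a choose j) (b choose j) (c)_{a+b-j}`. Inserted in
`∑ (-1)^i (2m choose i) (c)_i (c)_{2m-i} f(i, 2m-i)`, this leaves `j`-shifted sums of the same kind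
without the factors `(c)`. For `f = 1` only `j = m` survives, which is Kummer's theorem; for
`f = (b)_i (b)_{2m-i}` the inner sums are evaluated by Kummer's theorem at `b + j`, and
Vandermonde's convolution sums over `j`, which is Dixon's theorem.

Since `(2k+2l choose k+l) (k+l)! = 4^k (2l choose l) l! (l + 1/2)_k`, the sum over central binomial
coefficients with `n = 2m` is Dixon's sum at `b = l + 1/2`, `c = -(2m + l)`. For odd `n` the terms
cancel in pairs.
-/

section DixonSum

open Finset hiding mem_antidiagonal
open Finset.HasAntidiagonal (mem_antidiagonal)
open Polynomial
open scoped Nat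

theorem ascPochhammer_eval_add_index {S : Type*} [CommSemiring S] (x : S) (m n : ℕ) :
    (ascPochhammer S (m + n)).eval x =
      (ascPochhammer S m).eval x * (ascPochhammer S n).eval (x + m) := by
  simp [← ascPochhammer_mul]

theorem ascPochhammer_eval_add {S : Type*} [CommSemiring S] (x y : S) (n : ℕ) :
    (ascPochhammer S n).eval (x + y) = ∑ p ∈ antidiagonal n,
      (n.choose p.1 : S) * ((ascPochhammer S p.1).eval x * (ascPochhammer S p.2).eval y) := by
  induction n with
  | zero => simp
  | succ n ih =>
    rw [sum_antidiagonal_choose_succ_mul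
        (fun i j ↦ (ascPochhammer S i).eval x * (ascPochhammer S j).eval y),
      ← sum_add_distrib, ascPochhammer_succ_eval, ih, sum_mul]
    refine sum_congr rfl fun p hp ↦ ?_
    rw [mem_antidiagonal] at hp
    rw [← Nat.choose_symm_of_eq_add hp.symm, ascPochhammer_succ_eval, ascPochhammer_succ_eval,
      ← hp]
    push_cast
    ring

theorem ascPochhammer_eval_neg_natCast {R : Type*} [Ring R] (n k : ℕ) :
    (ascPochhammer R k).eval (-(n : R)) = (-1) ^ k * n.descFactorial k := by
  rw [ascPochhammer_eval_neg_eq_descPochhammer, descPochhammer_eval_eq_descFactorial]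

theorem ascPochhammer_eval_neg_mul_factorial {R : Type*} [Ring R] (a k : ℕ) :
    (ascPochhammer R k).eval (-((a + k : ℕ) : R)) * a ! = (-1) ^ k * (a + k)! := by
  have h := Nat.factorial_mul_descFactorial (Nat.le_add_left k a)
  rw [Nat.add_sub_cancel] at h
  rw [ascPochhammer_eval_neg_natCast, ← h, Nat.cast_mul, Nat.cast_comm, mul_assoc]

-- Vandermonde applied to `c = -b + (c + b)`, where `(-b)_j = (-1)^j j! (b choose j)`.
theorem ascPochhammer_eval_mul_eval {R : Type*} [CommRing R] (c : R) {a b N : ℕ}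
    (hN : min a b ≤ N) :
    (ascPochhammer R a).eval c * (ascPochhammer R b).eval c = ∑ j ∈ range (N + 1),
      (-1) ^ j * (j ! * a.choose j * b.choose j : ℕ) * (ascPochhammer R (a + b - j)).eval c := by
  wlog hab : a ≤ b generalizing a b
  · rw [mul_comm, this (min_comm a b ▸ hN) (le_of_not_ge hab), add_comm b a]
    simp only [mul_right_comm]
  rw [min_eq_left hab] at hN
  trans ∑ j ∈ range (a + 1),
      (-1) ^ j * (j ! * a.choose j * b.choose j : ℕ) * (ascPochhammer R (a + b - j)).eval c
  · nth_rw 1 [show c = -(b : R) + (c + b) by ring]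
    rw [ascPochhammer_eval_add, sum_mul, Nat.sum_antidiagonal_eq_sum_range_succ_mk]
    refine sum_congr rfl fun j hj ↦ ?_
    rw [show a + b - j = b + (a - j) by grind, ascPochhammer_eval_add_index,
      ascPochhammer_eval_neg_natCast, Nat.descFactorial_eq_factorial_mul_choose]
    push_cast
    ring
  · refine sum_subset (range_mono (by gcongr)) fun j _ hj ↦ ?_
    simp [Nat.choose_eq_zero_of_lt (show a < j by simpa using hj)]

theorem alternating_sum_antidiagonal_choose {R : Type*} [Ring R] (n : ℕ) :
    ∑ p ∈ antidiagonal n, (-1 : R) ^ p.1 * n.choose p.1 = if n = 0 then 1 else 0 := by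
  have binomial := (Commute.neg_one_left (1 : R)).add_pow' n
  simpa [zero_pow_eq, Nat.cast_comm, eq_comm] using binomial

theorem alternating_sum_choose_mul_eq_zero_of_odd {R : Type*} [Ring R]
    [IsAddTorsionFree R] {n : ℕ} (hn : Odd n) {f : ℕ → ℕ → R} (hf : ∀ i j, f i j = f j i) :
    ∑ p ∈ antidiagonal n, (-1) ^ p.1 * (n.choose p.1 : R) * f p.1 p.2 = 0 := by
  rw [← self_eq_neg, ← sum_neg_distrib]
  nth_rw 1 [← Nat.sum_antidiagonal_swap]
  refine sum_congr rfl fun ⟨i, j⟩ hp ↦ ?_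
  obtain rfl := mem_antidiagonal.mp hp
  have sign : (-1 : R) ^ j = -(-1) ^ i := by
    rcases Nat.even_or_odd i with hi | hi
    · simp [hi.neg_one_pow, ((Nat.odd_add'.mp hn).mpr hi).neg_one_pow]
    · simp [hi.neg_one_pow, ((Nat.odd_add.mp hn).mp hi).neg_one_pow]
  simp [sign, hf j, Nat.choose_symm_of_eq_add (show i + j = j + i from add_comm i j)]

theorem choose_mul_choose_mul_choose (i j k : ℕ) :
    (i + k + 2 * j).choose (i + j) * (i + j).choose j * (k + j).choose j =
      (i + k + 2 * j).choose j * (i + k + j).choose j * (i + k).choose i := by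
  have left : (i + k + 2 * j).choose (i + j) * (i + j).choose j =
      (i + k + 2 * j).choose j * (i + k + j).choose i := by
    rw [Nat.choose_mul (Nat.le_add_left j i)]
    congr 2 <;> omega
  have right : (i + k + j).choose i * (k + j).choose j =
      (i + k + j).choose j * (i + k).choose i := by
    rw [Nat.choose_symm_of_eq_add (show i + k + j = i + (k + j) by ring),
      Nat.choose_mul (Nat.le_add_left j k), Nat.add_sub_cancel, Nat.add_sub_cancel,
      Nat.choose_symm_add]
  rw [left, mul_assoc, right, mul_assoc]

theorem sum_antidiagonal_choose_mul_choose_mul_choose {S : Type*} [Semiring S] (n j : ℕ)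
    (f : ℕ → ℕ → S) :
    ∑ p ∈ antidiagonal (n + 2 * j),
        ((n + 2 * j).choose p.1 * p.1.choose j * p.2.choose j : ℕ) * f p.1 p.2 =
      ((n + 2 * j).choose j * (n + j).choose j : ℕ) *
        ∑ p ∈ antidiagonal n, n.choose p.1 * f (p.1 + j) (p.2 + j) := by
  rw [mul_sum]
  symm
  refine sum_of_injOn (fun p ↦ (p.1 + j, p.2 + j)) ?_ ?_ ?_ ?_
  · rintro ⟨a, b⟩ _ ⟨c, d⟩ _
    simp
  · rintro ⟨a, b⟩
    simp only [mem_coe, mem_antidiagonal]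
    omega
  · rintro ⟨a, b⟩ hab not_mem_image
    have lt_or_lt : a < j ∨ b < j := by
      by_contra! le
      refine not_mem_image ⟨(a - j, b - j), ?_, ?_⟩
      · simp only [mem_coe, mem_antidiagonal] at hab ⊢
        omega
      · simp [le.1, le.2]
    rcases lt_or_lt with h | h <;> simp [Nat.choose_eq_zero_of_lt h]
  · rintro ⟨a, b⟩ hab
    obtain rfl := mem_antidiagonal.mp hab
    rw [choose_mul_choose_mul_choose, Nat.cast_mul _ (Nat.choose _ a), mul_assoc]

theorem centralBinom_mul_factorial_mul_factorial (n : ℕ) :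
    n.centralBinom * n ! * n ! = (2 * n)! := by
  rw [Nat.centralBinom, two_mul, Nat.add_choose_mul_factorial_mul_factorial]

theorem factorial_mul_choose_mul_choose_mul_centralBinom (i j : ℕ) :
    j ! * (2 * (j + i)).choose j * (2 * i + j).choose j * (i ! * i.centralBinom) =
      (j + i)! * (j + i).centralBinom * (j + i).choose j := by
  have outer : (2 * (j + i)).choose j * (2 * i + j)! * j ! = (2 * (j + i))! := by
    rw [show 2 * (j + i) = 2 * i + j + j by ring, Nat.add_choose_mul_factorial_mul_factorial]
  have middle := Nat.add_choose_mul_factorial_mul_factorial (2 * i) j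
  have inner := Nat.add_choose_mul_factorial_mul_factorial i j
  rw [add_comm i j] at inner
  refine Nat.eq_of_mul_eq_mul_right (mul_pos j.factorial_pos i.factorial_pos) ?_
  trans (2 * (j + i))!
  · rw [← outer, ← middle, ← centralBinom_mul_factorial_mul_factorial i]
    ring
  · rw [← centralBinom_mul_factorial_mul_factorial (j + i)]
    nth_rw 2 [← inner]
    ring

section CommRing

variable {R : Type*} [CommRing R]

theorem alternating_sum_choose_mul_ascPochhammer_mul (c : R) (m : ℕ) (f : ℕ → ℕ → R) :
    ∑ p ∈ antidiagonal (2 * m), (-1) ^ p.1 * ((2 * m).choose p.1 : R) *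
        ((ascPochhammer R p.1).eval c * (ascPochhammer R p.2).eval c) * f p.1 p.2 =
      ∑ q ∈ antidiagonal m,
        (q.1 ! * (2 * m).choose q.1 * (2 * q.2 + q.1).choose q.1 : ℕ) *
          (ascPochhammer R (m + q.2)).eval c *
          ∑ p ∈ antidiagonal (2 * q.2),
            (-1) ^ p.1 * ((2 * q.2).choose p.1 : R) * f (p.1 + q.1) (p.2 + q.1) := by
  trans ∑ j ∈ range (m + 1), ∑ p ∈ antidiagonal (2 * m),
    ((2 * m).choose p.1 * p.1.choose j * p.2.choose j : ℕ) *
      ((-1) ^ (p.1 + j) * j ! * (ascPochhammer R (2 * m - j)).eval c * f p.1 p.2)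
  · rw [sum_comm]
    refine sum_congr rfl fun ⟨a, b⟩ hab ↦ ?_
    rw [mem_antidiagonal] at hab
    rw [ascPochhammer_eval_mul_eval c (N := m) (by grind), hab, mul_sum, sum_mul]
    refine sum_congr rfl fun j _ ↦ ?_
    push_cast
    ring
  · rw [← Nat.sum_antidiagonal_eq_sum_range_succ_mk (fun q : ℕ × ℕ ↦
      ∑ p ∈ antidiagonal (2 * m), ((2 * m).choose p.1 * p.1.choose q.1 * p.2.choose q.1 : ℕ) *
        ((-1) ^ (p.1 + q.1) * q.1 ! * (ascPochhammer R (2 * m - q.1)).eval c * f p.1 p.2))]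
    refine sum_congr rfl fun ⟨j, i⟩ hq ↦ ?_
    obtain rfl := mem_antidiagonal.mp hq
    rw [show 2 * (j + i) = 2 * i + 2 * j by ring,
      sum_antidiagonal_choose_mul_choose_mul_choose _ _ (fun a b ↦
        (-1) ^ (a + j) * j ! * (ascPochhammer R (2 * i + 2 * j - j)).eval c * f a b),
      show 2 * i + 2 * j - j = j + i + i by omega]
    simp only [mul_sum]
    refine sum_congr rfl fun p _ ↦ ?_
    have sign : (-1 : R) ^ (p.1 + j + j) = (-1) ^ p.1 := by
      rw [add_assoc, pow_add, Even.neg_one_pow ⟨j, rfl⟩, mul_one]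
    rw [sign]
    push_cast
    ring

/-- Kummer's theorem for the terminating well-poised series `₂F₁(-2m, b; 1-2m-b; -1)`, with
denominators cleared. -/
theorem kummer_alternating_sum (b : R) (m : ℕ) :
    ∑ p ∈ antidiagonal (2 * m), (-1) ^ p.1 * ((2 * m).choose p.1 : R) *
        ((ascPochhammer R p.1).eval b * (ascPochhammer R p.2).eval b) =
      m ! * m.centralBinom * (ascPochhammer R m).eval b := by
  have expand := alternating_sum_choose_mul_ascPochhammer_mul b m fun _ _ ↦ 1
  simp only [mul_one, alternating_sum_antidiagonal_choose] at expand
  rw [expand, sum_eq_single_of_mem (m, 0) (by simp)]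
  · simp [Nat.centralBinom]
  · rintro ⟨j, i⟩ hq hne
    have : i ≠ 0 := by
      rintro rfl
      simp_all
    simp [this]

/-- Dixon's theorem for the terminating well-poised series `₃F₂(-2m, b, c; 1-2m-b, 1-2m-c; 1)`,
with denominators cleared. -/
theorem dixon_alternating_sum (b c : R) (m : ℕ) :
    ∑ p ∈ antidiagonal (2 * m), (-1) ^ p.1 * ((2 * m).choose p.1 : R) *
        ((ascPochhammer R p.1).eval c * (ascPochhammer R p.2).eval c) *
        ((ascPochhammer R p.1).eval b * (ascPochhammer R p.2).eval b) =
      m ! * m.centralBinom * (ascPochhammer R m).eval b * (ascPochhammer R m).eval c *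
        (ascPochhammer R m).eval (b + c + m) := by
  rw [alternating_sum_choose_mul_ascPochhammer_mul c m
      (fun i j ↦ (ascPochhammer R i).eval b * (ascPochhammer R j).eval b),
    add_assoc, ascPochhammer_eval_add, mul_sum]
  refine sum_congr rfl fun ⟨j, i⟩ hq ↦ ?_
  obtain rfl := mem_antidiagonal.mp hq
  have inner : ∑ p ∈ antidiagonal (2 * i), (-1) ^ p.1 * ((2 * i).choose p.1 : R) *
      ((ascPochhammer R (p.1 + j)).eval b * (ascPochhammer R (p.2 + j)).eval b) =
      i ! * i.centralBinom * (ascPochhammer R j).eval b * (ascPochhammer R (j + i)).eval b := by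
    have kummer := congrArg ((ascPochhammer R j).eval b ^ 2 * ·)
      (kummer_alternating_sum (b + j) i)
    simp only [mul_sum] at kummer
    simp only [add_comm _ j, ascPochhammer_eval_add_index]
    convert kummer using 1
    · exact sum_congr rfl fun p _ ↦ by ring
    · ring
  have coeff := congrArg (Nat.cast (R := R)) (factorial_mul_choose_mul_choose_mul_centralBinom i j)
  dsimp only
  rw [inner, ascPochhammer_eval_add_index c (j + i) i]
  push_cast at coeff ⊢
  linear_combination (ascPochhammer R j).eval b * (ascPochhammer R (j + i)).eval b *
    (ascPochhammer R (j + i)).eval c * (ascPochhammer R i).eval (c + (j + i)) * coeff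

end CommRing

section Field

variable {K : Type*} [Field K] [CharZero K]

theorem centralBinom_add_mul_factorial (l k : ℕ) :
    ((k + l).centralBinom * (k + l)! : K) =
      4 ^ k * (l.centralBinom * l !) * (ascPochhammer K k).eval (l + 1 / 2 : K) := by
  induction k with
  | zero => simp
  | succ k ih =>
    have succ := congrArg (Nat.cast (R := K)) (Nat.succ_mul_centralBinom_succ (k + l))
    push_cast at succ
    rw [ascPochhammer_succ_eval, add_right_comm, Nat.factorial_succ]
    push_cast
    linear_combination (2 * (2 * (k + l) + 1)) * ih + (k + l)! * succ

theorem ascPochhammer_eval_half_sub (m : ℕ) :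
    4 ^ m * (ascPochhammer K m).eval (1 / 2 - m : K) = (-1) ^ m * (m.centralBinom * m !) := by
  have half := centralBinom_add_mul_factorial (K := K) 0 m
  rw [Nat.cast_zero, zero_add, Nat.centralBinom_zero, Nat.factorial_zero, Nat.cast_one, mul_one,
    mul_one, add_zero] at half
  rw [show (1 / 2 - m : K) = -(m - 1 / 2) by ring, ascPochhammer_eval_neg_eq_descPochhammer,
    descPochhammer_eval_eq_ascPochhammer, show (m - 1 / 2 - m + 1 : K) = 1 / 2 by ring, half,
    mul_left_comm]

theorem centralBinom_mul_centralBinom (l i j : ℕ) :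
    ((i + l).centralBinom * (j + l).centralBinom : K) =
      (-4) ^ (i + j) * (l.centralBinom * l ! / (i + j + l)!) ^ 2 *
        (((ascPochhammer K i).eval (-((i + j + l : ℕ) : K)) *
            (ascPochhammer K j).eval (-((i + j + l : ℕ) : K))) *
          ((ascPochhammer K i).eval (l + 1 / 2 : K) *
            (ascPochhammer K j).eval (l + 1 / 2 : K))) := by
  have neg_i := ascPochhammer_eval_neg_mul_factorial (R := K) (j + l) i
  have neg_j := ascPochhammer_eval_neg_mul_factorial (R := K) (i + l) j
  rw [show j + l + i = i + j + l by ring] at neg_i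
  rw [show i + l + j = i + j + l by ring] at neg_j
  have fac (n : ℕ) : (n ! : K) ≠ 0 := mod_cast n.factorial_ne_zero
  rw [eq_div_of_mul_eq (fac _) (centralBinom_add_mul_factorial l i),
    eq_div_of_mul_eq (fac _) (centralBinom_add_mul_factorial l j),
    eq_div_of_mul_eq (fac _) neg_i, eq_div_of_mul_eq (fac _) neg_j,
    show (-4 : K) = (-1) * 4 by norm_num, mul_pow, pow_add, pow_add]
  have sign (n : ℕ) : ((-1 : K) ^ n) ^ 2 = 1 := by rw [← pow_mul', pow_mul]; simp
  field_simp [fac]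
  rw [sign, sign]
  ring

theorem ascPochhammer_eval_half_mul_neg_mul_half_sub (l m : ℕ) :
    16 ^ m * (l.centralBinom * l !) * ((ascPochhammer K m).eval (l + 1 / 2 : K) *
        (ascPochhammer K m).eval (-((2 * m + l : ℕ) : K)) *
        (ascPochhammer K m).eval (1 / 2 - m : K)) =
      (m + l).centralBinom * (2 * m + l)! * (m.centralBinom * m !) := by
  have neg := ascPochhammer_eval_neg_mul_factorial (R := K) (m + l) m
  rw [show m + l + m = 2 * m + l by ring] at neg
  have fac_ne : ((m + l)! : K) ≠ 0 := mod_cast (m + l).factorial_ne_zero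
  refine mul_right_cancel₀ fac_ne ?_
  calc
    _ = (4 ^ m * (l.centralBinom * l !) * (ascPochhammer K m).eval (l + 1 / 2 : K)) *
          ((ascPochhammer K m).eval (-((2 * m + l : ℕ) : K)) * (m + l)!) *
          (4 ^ m * (ascPochhammer K m).eval (1 / 2 - m : K)) := by
      rw [show (16 : K) = 4 * 4 by norm_num, mul_pow]
      ring
    _ = (m + l).centralBinom * (m + l)! * ((-1) ^ m * (2 * m + l)!) *
          ((-1) ^ m * (m.centralBinom * m !)) := by
      rw [← centralBinom_add_mul_factorial, neg, ascPochhammer_eval_half_sub]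
    _ = (-1) ^ m * (-1) ^ m *
          ((m + l).centralBinom * (2 * m + l)! * (m.centralBinom * m !) * (m + l)!) := by ring
    _ = _ := by rw [← mul_pow, neg_mul_neg, one_mul, one_pow, one_mul]

theorem alternating_sum_choose_mul_centralBinom_mul_centralBinom (l m : ℕ) :
    ∑ p ∈ antidiagonal (2 * m), (-1) ^ p.1 * ((2 * m).choose p.1 : K) *
        ((p.1 + l).centralBinom * (p.2 + l).centralBinom) =
      l ! * (2 * m)! / (2 * m + l)! * l.centralBinom * m.centralBinom *
        (m + l).centralBinom := by
  set r : K := l.centralBinom * l ! / (2 * m + l)! with hr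
  have dixon := dixon_alternating_sum (l + 1 / 2 : K) (-((2 * m + l : ℕ) : K)) m
  rw [show (l + 1 / 2 + -((2 * m + l : ℕ) : K) + m) = 1 / 2 - m by push_cast; ring] at dixon
  have dixon_value := ascPochhammer_eval_half_mul_neg_mul_half_sub (K := K) l m
  have fac_ne : ((2 * m + l)! : K) ≠ 0 := mod_cast (2 * m + l).factorial_ne_zero
  calc
    _ = (-4) ^ (2 * m) * r ^ 2 *
        ∑ p ∈ antidiagonal (2 * m), (-1) ^ p.1 * ((2 * m).choose p.1 : K) *
          ((ascPochhammer K p.1).eval (-((2 * m + l : ℕ) : K)) *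
            (ascPochhammer K p.2).eval (-((2 * m + l : ℕ) : K))) *
          ((ascPochhammer K p.1).eval (l + 1 / 2 : K) *
            (ascPochhammer K p.2).eval (l + 1 / 2 : K)) := by
      rw [mul_sum]
      refine sum_congr rfl fun p hp ↦ ?_
      rw [centralBinom_mul_centralBinom, mem_antidiagonal.mp hp]
      ring
    _ = m ! * m.centralBinom * r * (16 ^ m * (l.centralBinom * l !) *
          ((ascPochhammer K m).eval (l + 1 / 2 : K) *
            (ascPochhammer K m).eval (-((2 * m + l : ℕ) : K)) *
            (ascPochhammer K m).eval (1 / 2 - m : K))) / (2 * m + l)! := by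
      rw [dixon, pow_mul, show (-4 : K) ^ 2 = 16 by norm_num, hr]
      ring
    _ = _ := by
      rw [dixon_value, ← centralBinom_mul_factorial_mul_factorial m, hr]
      push_cast
      field_simp

end Field

theorem pochQ_natCast_add_one (n l : ℕ) : pochQ ((n : ℚ) + 1) l = (n + l)! / n ! := by
  have asc : pochQ ((n : ℚ) + 1) l = (n + 1).ascFactorial l := by
    simp [pochQ, Nat.ascFactorial_eq_prod_range]
  have fac_ne : (n ! : ℚ) ≠ 0 := mod_cast n.factorial_ne_zero
  rw [asc, eq_div_iff fac_ne, mul_comm, ← Nat.cast_mul, Nat.factorial_mul_ascFactorial]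

theorem sum_range_choose_mul_choose_eq_sum_antidiagonal_centralBinom {R : Type*} [Ring R]
    (n l : ℕ) :
    ∑ k ∈ range (n + 1),
        (-1 : R) ^ k * (n.choose k : R) * ((2 * k + 2 * l).choose (k + l) : R) *
          ((2 * n - 2 * k + 2 * l).choose (n - k + l) : R) =
      ∑ p ∈ antidiagonal n, (-1) ^ p.1 * (n.choose p.1 : R) *
        ((p.1 + l).centralBinom * (p.2 + l).centralBinom) := by
  rw [Nat.sum_antidiagonal_eq_sum_range_succ_mk]
  refine sum_congr rfl fun k _ ↦ ?_
  rw [Nat.centralBinom, Nat.centralBinom, ← mul_assoc, mul_add, mul_add, Nat.mul_sub]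

end DixonSum

/-- Theorem C: alternating convolution of two central binomial coefficients. -/
theorem stmt_2 (n lam : ℕ) :
    ∑ k ∈ Finset.range (n + 1),
        (-1 : ℚ) ^ k * (n.choose k : ℚ) * ((2 * k + 2 * lam).choose (k + lam) : ℚ)
          * ((2 * n - 2 * k + 2 * lam).choose (n - k + lam) : ℚ)
      = ((lam.factorial : ℚ) * (if Even n then 1 else 0) / pochQ ((n : ℚ) + 1) lam)
          * ((2 * lam).choose lam : ℚ) * (n.choose (n / 2) : ℚ)
          * ((2 * lam + n).choose (lam + n / 2) : ℚ) := by
  rw [sum_range_choose_mul_choose_eq_sum_antidiagonal_centralBinom]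
  rcases Nat.even_or_odd' n with ⟨m, rfl | rfl⟩
  · rw [alternating_sum_choose_mul_centralBinom_mul_centralBinom, if_pos (even_two_mul m),
      pochQ_natCast_add_one, Nat.mul_div_cancel_left m two_pos, ← mul_add, add_comm lam m,
      Nat.centralBinom, Nat.centralBinom, Nat.centralBinom, mul_one, div_div_eq_mul_div]
  · have odd : Odd (2 * m + 1) := odd_two_mul_add_one m
    have vanish := alternating_sum_choose_mul_eq_zero_of_odd odd
      (f := fun i j ↦ ((i + lam).centralBinom * (j + lam).centralBinom : ℚ))
      fun _ _ ↦ mul_comm _ _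
    simp [vanish]
end

section
/- For all natural numbers n ≥ 1 and λ, ∑_{k=0}^{n} (−1)^k · binom(n,k) · binom(2k+2λ, k+λ) · binom(2n−2k+2λ, n−k+λ) · (n−k+λ) equals (λ!/(n)_λ) · binom(n, ⌊n/2⌋) · binom(2λ, λ) · binom(2λ+n, λ+⌊n/2⌋) multiplied by n(2λ+n)/(2(λ+n)) when n is even, and by (n+1)(2λ+n+1)/(2(λ+n)) when n is odd, as an equality of rational numbers. -/
/-!
The summand is a multiple of `(-1)ᵏ C(n,k) u(k) u(n-k)` for `u(k) = C(2k+2λ, k+λ)`. Since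
`n - k + λ = ((n - 2k) + (n + 2λ)) / 2`, the reflection `k ↦ n - k` kills the part of weight
`n - 2k` when `n` is even and the constant part when `n` is odd. What survives is a terminating
well-poised sum of Dixon type: `u` satisfies `(c + k) u(k+1) = (a k + b) u(k)`, the shifted sequence
`u(· + 1)` satisfies the same recurrence with `(b + a, c + 1)` in place of `(b, c)`, and telescoping
relates the sum of length `n + 2` for `u` to the sum of length `n` for `u(· + 1)`.
-/

open Finset
open scoped Nat

section AltBinomSum

variable {R : Type*} [CommRing R]

/-- The `k`-th term `(-1)ᵏ C(n,k) u(k) u(n-k)` of the alternating binomial convolution of a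
sequence `u` with itself. -/
def altBinomTerm (u : ℕ → R) (n k : ℕ) : R :=
  (-1) ^ k * (n.choose k : R) * u k * u (n - k)

/-- The alternating binomial convolution of `u` with itself, where the `k`-th term is weighted by
`w (n - 2k)`. The argument `n - 2k` is chosen because it changes sign under `k ↦ n - k`. -/
def altBinomSum (w : R → R) (u : ℕ → R) (n : ℕ) : R :=
  ∑ k ∈ range (n + 1), altBinomTerm u n k * w (n - 2 * k)

lemma altBinomTerm_reflect (u : ℕ → R) {n k : ℕ} (hk : k ≤ n) :
    altBinomTerm u n (n - k) = (-1) ^ n * altBinomTerm u n k := by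
  obtain ⟨d, rfl⟩ := Nat.exists_eq_add_of_le hk
  have hsign : (-1 : R) ^ k * (-1) ^ k = 1 := by rw [← mul_pow]; simp
  rw [altBinomTerm, altBinomTerm, Nat.choose_symm hk, Nat.sub_sub_self hk, Nat.add_sub_cancel_left,
    pow_add]
  linear_combination -(-1) ^ d * ((k + d).choose k : R) * u k * u d * hsign

lemma altBinomSum_eq_zero [IsDomain R] [CharZero R] {w : R → R} {n : ℕ}
    (hw : ∀ x, w (-x) = (-1) ^ (n + 1) * w x) (u : ℕ → R) : altBinomSum w u n = 0 := by
  suffices altBinomSum w u n = -altBinomSum w u n from self_eq_neg.mp this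
  have hsign : (-1 : R) ^ n * (-1) ^ n = 1 := by rw [← mul_pow]; simp
  calc altBinomSum w u n
      = ∑ k ∈ range (n + 1), altBinomTerm u n (n - k) * w (n - 2 * ((n - k : ℕ) : R)) :=
        (sum_flip fun k => altBinomTerm u n k * w (n - 2 * k)).symm
    _ = ∑ k ∈ range (n + 1), -(altBinomTerm u n k * w (n - 2 * k)) := by
        refine sum_congr rfl fun k hk => ?_
        have hkn : k ≤ n := Nat.lt_succ_iff.mp (mem_range.mp hk)
        rw [altBinomTerm_reflect u hkn, Nat.cast_sub hkn,
          show (n : R) - 2 * (n - k) = -(n - 2 * k) by ring, hw]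
        linear_combination -altBinomTerm u n k * w (n - 2 * k) * hsign
    _ = -altBinomSum w u n := sum_neg_distrib _

lemma altBinomTerm_succ_succ (u : ℕ → R) {n k : ℕ} (hk : k ≤ n) :
    altBinomTerm u (n + 2) (k + 1) * ((k + 1) * (n + 1 - k))
      = -((n + 2) * (n + 1)) * altBinomTerm (fun j => u (j + 1)) n k := by
  obtain ⟨d, rfl⟩ := Nat.exists_eq_add_of_le hk
  have absorb_left : ((k + d + 2).choose (k + 1) : R) * (k + 1)
      = (k + d + 2) * (k + d + 1).choose k := by
    have := congrArg (Nat.cast (R := R)) (Nat.add_one_mul_choose_eq (k + d + 1) k)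
    push_cast at this
    linear_combination -this
  have absorb_right : ((k + d).choose k : R) * (k + d + 1) = (k + d + 1).choose k * (d + 1) := by
    have := congrArg (Nat.cast (R := R)) (Nat.choose_mul_succ_eq (k + d) k)
    rw [show k + d + 1 - k = d + 1 by lia] at this
    push_cast at this
    exact this
  simp only [altBinomTerm, show k + d + 2 - (k + 1) = d + 1 by lia, Nat.add_sub_cancel_left,
    pow_succ, Nat.cast_add]
  linear_combination (-(-1) ^ k * u (k + 1) * u (d + 1)) *
    ((d + 1) * absorb_left - (k + d + 2) * absorb_right)

lemma sum_altBinomTerm_mul_mul_sub (w : R → R) (u : ℕ → R) (n : ℕ) :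
    ∑ k ∈ range (n + 2 + 1),
        altBinomTerm u (n + 2) k * (k * (n + 2 - k)) * w (((n + 2 : ℕ) : R) - 2 * k)
      = -((n + 2) * (n + 1)) * altBinomSum w (fun j => u (j + 1)) n := by
  rw [sum_range_succ, sum_range_succ', altBinomSum, mul_sum]
  simp only [Nat.cast_zero, zero_mul, mul_zero, add_zero, Nat.cast_add, Nat.cast_ofNat, sub_self,
    Nat.cast_one]
  refine sum_congr rfl fun k hk => ?_
  have hterm := altBinomTerm_succ_succ u (Nat.lt_succ_iff.mp (mem_range.mp hk))
  rw [show (n : R) + 2 - 2 * (k + 1) = n - 2 * k by ring]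
  linear_combination w (n - 2 * k) * hterm

/-- The sequence `u` is hypergeometric: the ratio `u (k + 1) / u k` is `(a k + b) / (c + k)`,
stated without division. Here `a` is a free scale, so that both `(b)ₖ / (c)ₖ` (`a = 1`) and integer
sequences such as the central binomial coefficients (`a = 4`) are covered. -/
def IsHypergeometric (a b c : R) (u : ℕ → R) : Prop :=
  ∀ k : ℕ, (c + k) * u (k + 1) = (a * k + b) * u k

section IsHypergeometric

variable {a b c : R} {u : ℕ → R}

lemma IsHypergeometric.altBinomTerm_succ_mul (hu : IsHypergeometric a b c u) {n k : ℕ}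
    (hk : k ≤ n) :
    altBinomTerm u n (k + 1) * ((k + 1) * (c + k) * (a * (n - (k + 1)) + b))
      = -(altBinomTerm u n k * ((n - k) * (c + (n - k) - 1) * (a * k + b))) := by
  obtain rfl | hlt := hk.eq_or_lt
  · simp [altBinomTerm]
  obtain ⟨d, rfl⟩ := Nat.exists_eq_add_of_lt hlt
  have hchoose : ((k + d + 1).choose (k + 1) : R) * (k + 1) = (k + d + 1).choose k * (d + 1) := by
    have := congrArg (Nat.cast (R := R)) (Nat.choose_succ_right_eq (k + d + 1) k)
    rw [show k + d + 1 - k = d + 1 by lia] at this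
    push_cast at this
    exact this
  simp only [altBinomTerm, show k + d + 1 - (k + 1) = d by lia,
    show k + d + 1 - k = d + 1 by lia, Nat.cast_add, Nat.cast_one, pow_succ]
  linear_combination (-(-1) ^ k * (c + k) * (a * d + b) * u (k + 1) * u d) * hchoose
    - ((-1) ^ k * (k + d + 1).choose k * (d + 1) * (a * d + b) * u d) * hu k
    + ((-1) ^ k * (k + d + 1).choose k * (d + 1) * (a * k + b) * u k) * hu d

lemma IsHypergeometric.sum_altBinomTerm_telescope (hu : IsHypergeometric a b c u) (n : ℕ)
    (v : ℕ → R) :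
    ∑ k ∈ range (n + 1), altBinomTerm u n k *
        (k * (c + k - 1) * (a * (n - k) + b) * v k
          + (n - k) * (c + (n - k) - 1) * (a * k + b) * v (k + 1)) = 0 := by
  let G : ℕ → R := fun k => altBinomTerm u n k * (k * (c + k - 1) * (a * (n - k) + b)) * v k
  calc _ = ∑ k ∈ range (n + 1), (G k - G (k + 1)) := by
        refine sum_congr rfl fun k hk => ?_
        have hstep := hu.altBinomTerm_succ_mul (Nat.lt_succ_iff.mp (mem_range.mp hk))
        simp only [G, Nat.cast_add, Nat.cast_one]
        linear_combination v (k + 1) * hstep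
    _ = G 0 - G (n + 1) := sum_range_sub' G (n + 1)
    _ = 0 := by simp [G, altBinomTerm]

lemma IsHypergeometric.shift (hu : IsHypergeometric a b c u) :
    IsHypergeometric a (b + a) (c + 1) fun j => u (j + 1) := by
  intro k
  have := hu (k + 1)
  push_cast at this
  linear_combination this

lemma mul_natCast_add_add_ne_zero (hb : ∀ k : ℕ, a * k + b ≠ 0) (k : ℕ) :
    a * k + (b + a) ≠ 0 := by
  have := hb (k + 1)
  push_cast at this
  convert this using 1
  ring

lemma prod_range_add_two (c : R) (n : ℕ) :
    ∏ i ∈ range (n + 2), (c + i) = c * (∏ i ∈ range n, (c + 1 + i)) * (c + n + 1) := by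
  rw [prod_range_succ, prod_range_succ', mul_comm (∏ _ ∈ _, _)]
  push_cast
  simp only [add_zero, add_assoc, add_comm (1 : R)]

variable [IsDomain R] [CharZero R]

lemma IsHypergeometric.altBinomSum_one_add_two (hu : IsHypergeometric a b c u) (n : ℕ) :
    b * (c + n + 1) * altBinomSum (fun _ => 1) u (n + 2)
      = (n + 1) * (a * (2 * c + n) - 2 * b) * altBinomSum (fun _ => 1) (fun j => u (j + 1)) n := by
  have htel := hu.sum_altBinomTerm_telescope (n + 2) fun _ => 1
  have hshift := sum_altBinomTerm_mul_mul_sub (fun _ => 1) u n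
  have hsplit : (n + 2) * (b * (c + n + 1)) * altBinomSum (fun _ => 1) u (n + 2)
      + (a * (2 * c + n) - 2 * b) * ∑ k ∈ range (n + 2 + 1),
        altBinomTerm u (n + 2) k * (k * (n + 2 - k)) * 1 = 0 := by
    rw [← htel, altBinomSum, mul_sum, mul_sum, ← sum_add_distrib]
    refine sum_congr rfl fun k _ => ?_
    push_cast
    ring
  refine mul_left_cancel₀ (show (n : R) + 2 ≠ 0 by exact_mod_cast (n + 1).succ_ne_zero) ?_
  linear_combination hsplit - (a * (2 * c + n) - 2 * b) * hshift

lemma IsHypergeometric.altBinomSum_id_add_two (hu : IsHypergeometric a b c u) (n : ℕ) :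
    b * (c + n + 1) * altBinomSum id u (n + 2)
      = (n + 2) * (a * (2 * c + n - 1) - 2 * b) * altBinomSum id (fun j => u (j + 1)) n := by
  have htel := hu.sum_altBinomTerm_telescope (n + 2) fun k => n + 3 - 2 * k
  have hshift := sum_altBinomTerm_mul_mul_sub id u n
  have hsplit : (n + 1) * (b * (c + n + 1)) * altBinomSum id u (n + 2)
      + (a * (2 * c + n - 1) - 2 * b) * ∑ k ∈ range (n + 2 + 1),
        altBinomTerm u (n + 2) k * (k * (n + 2 - k)) * id (((n + 2 : ℕ) : R) - 2 * k) = 0 := by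
    rw [← htel, altBinomSum, mul_sum, mul_sum, ← sum_add_distrib]
    refine sum_congr rfl fun k _ => ?_
    simp only [id_eq]
    push_cast
    ring
  refine mul_left_cancel₀ (show (n : R) + 1 ≠ 0 from n.cast_add_one_ne_zero) ?_
  linear_combination hsplit - (a * (2 * c + n - 1) - 2 * b) * hshift

theorem IsHypergeometric.altBinomSum_one_two_mul (hu : IsHypergeometric a b c u)
    (hb : ∀ k : ℕ, a * k + b ≠ 0) (m : ℕ) :
    m ! * (∏ i ∈ range (2 * m), (c + i)) * altBinomSum (fun _ => 1) u (2 * m)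
      = (2 * m)! * (∏ i ∈ range m, (a * (c + i) - b)) * u 0 * u m := by
  induction m generalizing b c u with
  | zero => simp [altBinomSum, altBinomTerm]
  | succ m ih =>
    have hb0 : b ≠ 0 := by simpa using hb 0
    have hu0 : c * u 1 = b * u 0 := by simpa using hu 0
    have hrec := hu.altBinomSum_one_add_two (2 * m)
    have hshift := ih hu.shift (mul_natCast_add_add_ne_zero hb)
    have hdiff (i : ℕ) : a * (c + 1 + i) - (b + a) = a * (c + i) - b := by ring
    simp only [zero_add, hdiff] at hshift
    rw [show 2 * (m + 1) = 2 * m + 2 by ring, prod_range_add_two, prod_range_succ]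
    simp only [Nat.factorial_succ]
    push_cast at hrec ⊢
    apply mul_left_cancel₀ hb0
    linear_combination ((m + 1) * m ! * c * ∏ i ∈ range (2 * m), (c + 1 + i)) * hrec
      + ((m + 1) * c * (2 * m + 1) * (a * (2 * c + 2 * m) - 2 * b)) * hshift
      + (2 * (m + 1) * (2 * m + 1) * (a * (c + m) - b) * (2 * m)!
        * (∏ i ∈ range m, (a * (c + i) - b)) * u (m + 1)) * hu0

theorem IsHypergeometric.altBinomSum_id_two_mul_add_one (hu : IsHypergeometric a b c u)
    (hb : ∀ k : ℕ, a * k + b ≠ 0) (m : ℕ) :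
    m ! * (∏ i ∈ range (2 * m + 1), (c + i)) * altBinomSum id u (2 * m + 1)
      = 2 * (2 * m + 1)! * (∏ i ∈ range m, (a * (c + i) - b)) * (a * m + b) * u 0 * u m := by
  induction m generalizing b c u with
  | zero =>
    have hu0 : c * u 1 = b * u 0 := by simpa using hu 0
    have hsum : altBinomSum id u 1 = 2 * u 0 * u 1 := by
      simp only [altBinomSum, altBinomTerm, sum_range_succ, sum_range_zero, Nat.choose_zero_right,
        Nat.choose_self, id_eq, Nat.cast_zero, Nat.cast_one, Nat.sub_self, Nat.sub_zero]
      ring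
    simp only [mul_zero, zero_add, hsum, Nat.factorial_zero, Nat.factorial_one, Nat.cast_zero,
      Nat.cast_one, prod_range_zero, prod_range_one]
    linear_combination 2 * u 0 * hu0
  | succ m ih =>
    have hb0 : b ≠ 0 := by simpa using hb 0
    have hu0 : c * u 1 = b * u 0 := by simpa using hu 0
    have hrec := hu.altBinomSum_id_add_two (2 * m + 1)
    have hshift := ih hu.shift (mul_natCast_add_add_ne_zero hb)
    have hdiff (i : ℕ) : a * (c + 1 + i) - (b + a) = a * (c + i) - b := by ring
    simp only [zero_add, hdiff] at hshift
    rw [show 2 * (m + 1) + 1 = 2 * m + 1 + 2 by ring, prod_range_add_two, prod_range_succ _ m,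
      Nat.factorial_succ m, Nat.factorial_succ (2 * m + 1 + 1),
      Nat.factorial_succ (2 * m + 1)]
    push_cast at hrec ⊢
    apply mul_left_cancel₀ hb0
    linear_combination ((m + 1) * m ! * c * ∏ i ∈ range (2 * m + 1), (c + 1 + i)) * hrec
      + ((m + 1) * c * (2 * m + 3) * (a * (2 * c + 2 * m) - 2 * b)) * hshift
      + (4 * (m + 1) * (2 * m + 3) * (a * (c + m) - b) * (2 * m + 1)!
        * (∏ i ∈ range m, (a * (c + i) - b)) * (a * m + (b + a)) * u (m + 1)) * hu0

end IsHypergeometric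

end AltBinomSum

section CentralBinom

variable {R : Type*} [CommRing R]

lemma natCast_succ_mul_centralBinom_succ (k : ℕ) :
    ((k : R) + 1) * (k + 1).centralBinom = 2 * (2 * k + 1) * k.centralBinom := by
  have := congrArg (Nat.cast (R := R)) (Nat.succ_mul_centralBinom_succ k)
  push_cast at this
  exact this

lemma add_one_mul_choose_two_mul_add_one (m : ℕ) :
    ((m : R) + 1) * (2 * m + 1).choose m = (2 * m + 1) * m.centralBinom := by
  have := congrArg (Nat.cast (R := R)) (Nat.choose_mul_succ_eq (2 * m) m)
  rw [show 2 * m + 1 - m = m + 1 by lia, ← Nat.centralBinom_eq_two_mul_choose] at this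
  push_cast at this
  linear_combination -this

lemma isHypergeometric_centralBinom_add (l : ℕ) :
    IsHypergeometric (4 : R) (4 * l + 2) (l + 1) fun k => ((k + l).centralBinom : R) := by
  intro k
  have := natCast_succ_mul_centralBinom_succ (R := R) (k + l)
  simp only [add_right_comm k 1 l]
  push_cast at this
  linear_combination this

lemma prod_range_four_mul_add_two (m : ℕ) :
    ∏ i ∈ range m, (4 * (i : R) + 2) = m ! * m.centralBinom := by
  induction m with
  | zero => simp
  | succ m ih =>
    rw [prod_range_succ, ih, Nat.factorial_succ]
    push_cast
    linear_combination -(m ! : R) * natCast_succ_mul_centralBinom_succ (R := R) m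

lemma prod_range_add_one_add (l n : ℕ) :
    ∏ i ∈ range n, ((l + 1 : R) + i) = n ! * (l + n).choose n := by
  rw [← Nat.cast_mul, ← Nat.ascFactorial_eq_factorial_mul_choose, Nat.ascFactorial_eq_prod_range]
  push_cast
  rfl

variable [CharZero R]

lemma four_mul_add_ne_zero (l k : ℕ) : (4 : R) * k + (4 * l + 2) ≠ 0 := by
  exact_mod_cast (by lia : 4 * k + (4 * l + 2) ≠ 0)

variable [IsDomain R]

theorem choose_mul_altBinomSum_one_centralBinom (l m : ℕ) :
    ((l + 2 * m).choose (2 * m) : R)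
        * altBinomSum (fun _ => 1) (fun k => ((k + l).centralBinom : R)) (2 * m)
      = m.centralBinom * l.centralBinom * (l + m).centralBinom := by
  have h := (isHypergeometric_centralBinom_add (R := R) l).altBinomSum_one_two_mul
    (four_mul_add_ne_zero l) m
  have hdiff (i : ℕ) : (4 : R) * (l + 1 + i) - (4 * l + 2) = 4 * i + 2 := by ring
  simp only [hdiff, prod_range_four_mul_add_two, prod_range_add_one_add, zero_add,
    add_comm m l] at h
  have hfact : (m ! * (2 * m)! : R) ≠ 0 :=
    mod_cast mul_ne_zero m.factorial_ne_zero (2 * m).factorial_ne_zero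
  apply mul_left_cancel₀ hfact
  linear_combination h

theorem choose_mul_altBinomSum_id_centralBinom (l m : ℕ) :
    ((l + (2 * m + 1)).choose (2 * m + 1) : R)
        * altBinomSum id (fun k => ((k + l).centralBinom : R)) (2 * m + 1)
      = 4 * (2 * (l + m) + 1) * m.centralBinom * l.centralBinom * (l + m).centralBinom := by
  have h := (isHypergeometric_centralBinom_add (R := R) l).altBinomSum_id_two_mul_add_one
    (four_mul_add_ne_zero l) m
  have hdiff (i : ℕ) : (4 : R) * (l + 1 + i) - (4 * l + 2) = 4 * i + 2 := by ring
  simp only [hdiff, prod_range_four_mul_add_two, prod_range_add_one_add, zero_add,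
    add_comm m l] at h
  have hfact : (m ! * (2 * m + 1)! : R) ≠ 0 :=
    mod_cast mul_ne_zero m.factorial_ne_zero (2 * m + 1).factorial_ne_zero
  apply mul_left_cancel₀ hfact
  linear_combination h

end CentralBinom

lemma factorial_div_pochQ_natCast {n : ℕ} (hn : n ≠ 0) (l : ℕ) :
    (l ! : ℚ) / pochQ n l = (l + n) / (n * (l + n).choose n) := by
  have hpoch : pochQ n l = (n.ascFactorial l : ℚ) := by
    simp [pochQ, Nat.ascFactorial_eq_prod_range]
  have hasc : (n : ℚ) * (l ! * (l + n).choose n) = (l + n) * n.ascFactorial l := by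
    have := Nat.succ_ascFactorial n l
    rw [Nat.succ_eq_add_one, Nat.ascFactorial_eq_factorial_mul_choose, ← Nat.choose_symm_add,
      add_comm n l] at this
    exact_mod_cast this
  have hchoose : ((l + n).choose n : ℚ) ≠ 0 :=
    Nat.cast_ne_zero.mpr (Nat.choose_pos (Nat.le_add_left n l)).ne'
  have hasc_ne : (n.ascFactorial l : ℚ) ≠ 0 := by
    obtain ⟨n, rfl⟩ := Nat.exists_eq_succ_of_ne_zero hn
    exact Nat.cast_ne_zero.mpr (Nat.ascFactorial_pos n l).ne'
  rw [hpoch, div_eq_div_iff hasc_ne (mul_ne_zero (Nat.cast_ne_zero.mpr hn) hchoose)]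
  linear_combination hasc

lemma sum_choose_mul_eq_altBinomSum (n l : ℕ) :
    ∑ k ∈ range (n + 1),
        (-1 : ℚ) ^ k * (n.choose k : ℚ) * ((2 * k + 2 * l).choose (k + l) : ℚ)
          * ((2 * n - 2 * k + 2 * l).choose (n - k + l) : ℚ) * ((n : ℚ) - k + l)
      = ((n + 2 * l) * altBinomSum (fun _ => 1) (fun k => ((k + l).centralBinom : ℚ)) n
          + altBinomSum id (fun k => ((k + l).centralBinom : ℚ)) n) / 2 := by
  rw [altBinomSum, altBinomSum, mul_sum, ← sum_add_distrib, sum_div]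
  refine sum_congr rfl fun k _ => ?_
  rw [altBinomTerm, Nat.centralBinom_eq_two_mul_choose, Nat.centralBinom_eq_two_mul_choose,
    ← mul_add 2 k l, show 2 * n - 2 * k + 2 * l = 2 * (n - k + l) by lia, id_eq]
  ring

/-- Theorem D: alternating convolution of two central binomial coefficients
with the extra linear factor `n - k + λ`. -/
theorem stmt_3 (n lam : ℕ) (hn : 1 ≤ n) :
    ∑ k ∈ Finset.range (n + 1),
        (-1 : ℚ) ^ k * (n.choose k : ℚ) * ((2 * k + 2 * lam).choose (k + lam) : ℚ)
          * ((2 * n - 2 * k + 2 * lam).choose (n - k + lam) : ℚ) * ((n : ℚ) - k + lam)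
      = ((lam.factorial : ℚ) / pochQ (n : ℚ) lam)
          * (n.choose (n / 2) : ℚ) * ((2 * lam).choose lam : ℚ)
          * ((2 * lam + n).choose (lam + n / 2) : ℚ)
          * (if Even n then (n : ℚ) * (2 * lam + n) / (2 * ((lam : ℚ) + n))
             else ((n : ℚ) + 1) * (2 * lam + n + 1) / (2 * ((lam : ℚ) + n))) := by
  have hln : (lam : ℚ) + n ≠ 0 := by positivity
  have hchoose : ((lam + n).choose n : ℚ) ≠ 0 :=
    Nat.cast_ne_zero.mpr (Nat.choose_pos (Nat.le_add_left n lam)).ne'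
  rw [sum_choose_mul_eq_altBinomSum, factorial_div_pochQ_natCast (by lia),
    ← Nat.centralBinom_eq_two_mul_choose]
  rcases Nat.even_or_odd' n with ⟨m, rfl | rfl⟩
  · have hS := choose_mul_altBinomSum_one_centralBinom (R := ℚ) lam m
    rw [altBinomSum_eq_zero (w := id) (by simp [pow_succ]), if_pos (even_two_mul m),
      Nat.mul_div_cancel_left m two_pos, ← mul_add, ← Nat.centralBinom_eq_two_mul_choose,
      ← Nat.centralBinom_eq_two_mul_choose]
    have hm : (m : ℚ) ≠ 0 := Nat.cast_ne_zero.mpr (by lia)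
    push_cast at hln ⊢
    field_simp
    linear_combination (2 * (lam + m) : ℚ) * hS
  · have hD := choose_mul_altBinomSum_id_centralBinom (R := ℚ) lam m
    have hm := add_one_mul_choose_two_mul_add_one (R := ℚ) m
    have hlm := add_one_mul_choose_two_mul_add_one (R := ℚ) (lam + m)
    rw [altBinomSum_eq_zero (w := fun _ => 1) (by simp [pow_succ]), if_neg (by simp),
      show (2 * m + 1) / 2 = m by lia,
      show 2 * lam + (2 * m + 1) = 2 * (lam + m) + 1 by ring]
    push_cast at hln hlm ⊢
    field_simp
    linear_combination (2 * m + 1) * hD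
      - 4 * lam.centralBinom * (2 * (lam + m) + 1).choose (lam + m) * (lam + m + 1) * hm
      - 4 * lam.centralBinom * (2 * m + 1) * m.centralBinom * hlm
end

section
/- Let a, c, e, λ be real numbers with λ ≠ 0, with a/2 − c − e > 0, such that 1+a−c, 1+a−e and λ are not zero or negative integers, and such that none of the arguments a, 1+a−c−e, (1+a)/2, (1+a)/2−c−e, (1+a)/2−c, (1+a)/2−e, a/2, (2+a)/2−c−e, (2+a)/2−c, (2+a)/2−e of the Gamma function below is zero or a negative integer. Then the convergent series ∑_{k=0}^{∞} (a)_k (c)_k (e)_k (1+λ)_k / ((1+a−c)_k (1+a−e)_k (λ)_k · k!) equals [Γ(1+a−c)Γ(1+a−e)/(Γ(a)Γ(1+a−c−e))] · { (1/(2λ)) · Γ((1+a)/2)Γ((1+a)/2−c−e)/(Γ((1+a)/2−c)Γ((1+a)/2−e)) + ((2λ−a)/(4λ)) · Γ(a/2)Γ((2+a)/2−c−e)/(Γ((2+a)/2−c)Γ((2+a)/2−e)) }. -/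
/-- Real Pochhammer symbol: `(x)_0 = 1`, `(x)_n = x(x+1)⋯(x+n-1)`. -/
def poch (x : ℝ) (n : ℕ) : ℝ := ∏ i ∈ Finset.range n, (x + i)

/-- `x` is neither zero nor a negative integer. -/
def NotNonposInt (x : ℝ) : Prop := ∀ m : ℕ, x ≠ -(m : ℝ)

/-!
Write `F(a, c, d, e)` for the very well-poised series
`₅F₄(a, 1+a/2, c, d, e; a/2, 1+a-c, 1+a-d, 1+a-e; 1)`. A Wilf–Zeilberger certificate shows that
`F(a, c, d, e) - R(a) F(a+1, c, d, e)` telescopes to zero for a rational function `R`. Iterating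
gives `F(a, c, d, e) = R(a) ⋯ R(a+n-1) F(a+n, c, d, e)`; as `n → ∞` the product of the `R`'s is a
quotient of Pochhammer symbols which tends to a quotient of Gamma values, while
`F(a+n, c, d, e) → 1` by dominated convergence. This is Dougall's evaluation of `F`.

The `₄F₃` series follows because `(1+λ)_k / (λ)_k = 1 + k/λ` is a combination of `1 + 2k/a` and `1`,
the weights of the very well-poised terms in which `d = (1+a)/2` and `d = a/2` respectively.
-/

open Filter Finset Topology Asymptotics

open Real (Gamma GammaSeq)

/-! ### Pochhammer symbols -/

lemma poch_zero (x : ℝ) : poch x 0 = 1 := prod_range_zero _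

lemma poch_succ (x : ℝ) (n : ℕ) : poch x (n + 1) = poch x n * (x + n) :=
  prod_range_succ _ n

lemma poch_add_one_mul (x : ℝ) (n : ℕ) : poch (x + 1) n * x = poch x n * (x + n) := by
  induction n with
  | zero => simp [poch]
  | succ n ih =>
    rw [poch_succ, poch_succ]
    push_cast
    linear_combination (x + 1 + n) * ih

lemma poch_add_one {x : ℝ} (hx : x ≠ 0) (n : ℕ) : poch (x + 1) n = poch x n * (x + n) / x :=
  eq_div_of_mul_eq hx (poch_add_one_mul x n)

lemma poch_one (n : ℕ) : poch 1 n = n.factorial := by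
  rw [← prod_range_add_one_eq_factorial]
  push_cast
  exact prod_congr rfl fun i _ => add_comm 1 (i : ℝ)

lemma poch_neg_natCast_eq_zero {m n : ℕ} (h : m < n) : poch (-m) n = 0 :=
  prod_eq_zero (mem_range.2 h) (neg_add_cancel _)

lemma poch_div_poch (x y : ℝ) (n : ℕ) :
    poch x n / poch y n = ∏ i ∈ range n, (x + i) / (y + i) :=
  (prod_div_distrib _ _).symm

lemma abs_poch_div_poch_le_of_forall {x y X Y : ℝ}
    (h : ∀ i : ℕ, |(x + i) / (y + i)| ≤ (X + i) / (Y + i)) (n : ℕ) :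
    |poch x n / poch y n| ≤ poch X n / poch Y n := by
  rw [poch_div_poch, poch_div_poch, abs_prod]
  exact prod_le_prod (fun _ _ => abs_nonneg _) fun i _ => h i

lemma abs_poch_div_poch_le {x y X Y : ℝ} (hx : |x| ≤ X) (hY : 0 < Y) (hy : Y ≤ y) (n : ℕ) :
    |poch x n / poch y n| ≤ poch X n / poch Y n := by
  refine abs_poch_div_poch_le_of_forall (fun i => ?_) n
  have hXi : |x + i| ≤ X + i := (abs_add_le x i).trans (by rw [Nat.abs_cast]; gcongr)
  have : (0 : ℝ) ≤ i := i.cast_nonneg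
  rw [abs_div, abs_of_pos (by linarith : 0 < y + i)]
  gcongr
  exact (abs_nonneg _).trans hXi

namespace NotNonposInt

variable {x : ℝ}

lemma of_pos (hx : 0 < x) : NotNonposInt x := fun m hm => by
  have : (0 : ℝ) ≤ m := m.cast_nonneg
  linarith

lemma add_natCast_ne_zero (hx : NotNonposInt x) (n : ℕ) : x + n ≠ 0 :=
  fun h => hx n (eq_neg_of_add_eq_zero_left h)

lemma ne_zero (hx : NotNonposInt x) : x ≠ 0 := by
  simpa using hx.add_natCast_ne_zero 0

lemma add_natCast (hx : NotNonposInt x) (n : ℕ) : NotNonposInt (x + n) := fun m hm =>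
  hx (m + n) (by push_cast; linarith)

lemma add_one (hx : NotNonposInt x) : NotNonposInt (x + 1) := by
  simpa using hx.add_natCast 1

lemma add_natCast_div_two (hx : NotNonposInt x) (n : ℕ) : NotNonposInt ((x + n) / 2) :=
  fun m hm => hx (2 * m + n) (by push_cast; linarith)

lemma poch_ne_zero (hx : NotNonposInt x) (n : ℕ) : poch x n ≠ 0 :=
  prod_ne_zero_iff.2 fun i _ => hx.add_natCast_ne_zero i

end NotNonposInt

/-! ### Asymptotics of Pochhammer quotients -/

lemma tendsto_add_natCast_div_add_natCast (x y : ℝ) :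
    Tendsto (fun n : ℕ => (x + n) / (y + n)) atTop (𝓝 1) := by
  simpa using tendsto_add_mul_div_add_mul_atTop_nhds x y 1 one_ne_zero

-- `Gamma` takes the value `0` at its poles, so `(Gamma x)⁻¹` is the entire function `1 / Γ`.
lemma tendsto_inv_GammaSeq (x : ℝ) :
    Tendsto (fun n => (GammaSeq x n)⁻¹) atTop (𝓝 (Gamma x)⁻¹) := by
  by_cases hx : Gamma x = 0
  · obtain ⟨m, rfl⟩ := (Real.Gamma_eq_zero_iff x).1 hx
    rw [hx, inv_zero]
    refine tendsto_const_nhds.congr' ?_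
    filter_upwards [eventually_ge_atTop m] with n hn
    have h_poch : ∏ j ∈ range (n + 1), (-(m : ℝ) + j) = 0 :=
      poch_neg_natCast_eq_zero (Nat.lt_succ_of_le hn)
    rw [GammaSeq, h_poch, div_zero, inv_zero]
  · exact (Real.GammaSeq_tendsto_Gamma x).inv₀ hx

lemma rpow_mul_poch_div_poch_succ (x y : ℝ) {n : ℕ} (hn : n ≠ 0) :
    (n : ℝ) ^ (y - x) * (poch x (n + 1) / poch y (n + 1)) =
      GammaSeq y n * (GammaSeq x n)⁻¹ := by
  have hn_pos : (0 : ℝ) < n := by positivity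
  have hx : (n : ℝ) ^ x ≠ 0 := (Real.rpow_pos_of_pos hn_pos x).ne'
  have h_fact : (n.factorial : ℝ) ≠ 0 := by positivity
  have hpoch (z : ℝ) : ∏ j ∈ range (n + 1), (z + j) = poch z (n + 1) := rfl
  rw [GammaSeq, GammaSeq, hpoch, hpoch, Real.rpow_sub hn_pos, inv_div]
  field_simp

lemma tendsto_rpow_mul_poch_div_poch (x : ℝ) {y : ℝ} (hy : NotNonposInt y) :
    Tendsto (fun n : ℕ => (n : ℝ) ^ (y - x) * (poch x n / poch y n)) atTop
      (𝓝 (Gamma y / Gamma x)) := by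
  have h := ((Real.GammaSeq_tendsto_Gamma y).mul (tendsto_inv_GammaSeq x)).mul
    (tendsto_add_natCast_div_add_natCast y x)
  rw [mul_one, ← div_eq_mul_inv] at h
  refine h.congr' ?_
  have hx : ∀ᶠ n : ℕ in atTop, x + n ≠ 0 :=
    (tendsto_atTop_add_const_left _ x tendsto_natCast_atTop_atTop).eventually_ne_atTop 0
  filter_upwards [eventually_ne_atTop 0, hx] with n hn hxn
  rw [← rpow_mul_poch_div_poch_succ x y hn, poch_succ, poch_succ]
  have := hy.add_natCast_ne_zero n
  field_simp

lemma isBigO_poch_div_poch (x : ℝ) {y : ℝ} (hy : NotNonposInt y) :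
    (fun n => poch x n / poch y n) =O[atTop] fun n : ℕ => (n : ℝ) ^ (x - y) := by
  have h := ((tendsto_rpow_mul_poch_div_poch x hy).isBigO_one ℝ).mul
    (isBigO_refl (fun n : ℕ => (n : ℝ) ^ (x - y)) atTop)
  refine h.congr' ?_ (.of_eq (by simp only [one_mul]))
  filter_upwards [eventually_gt_atTop 0] with n hn
  have hn_pos : (0 : ℝ) < n := by positivity
  rw [mul_right_comm, ← Real.rpow_add hn_pos, sub_add_sub_cancel, sub_self, Real.rpow_zero, one_mul]

lemma tendsto_poch_add_natCast_div (x y : ℝ) (k : ℕ) :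
    Tendsto (fun n : ℕ => poch (x + n) k / poch (y + n) k) atTop (𝓝 1) := by
  simp only [poch_div_poch]
  rw [← prod_const_one (s := range k)]
  refine tendsto_finsetProd _ fun i _ => ?_
  simpa only [add_right_comm] using tendsto_add_natCast_div_add_natCast (x + i) (y + i)

lemma tendsto_poch_div_poch_add_natCast (x y : ℝ) {k : ℕ} (hk : k ≠ 0) :
    Tendsto (fun n : ℕ => poch x k / poch (y + n) k) atTop (𝓝 0) := by
  simp only [poch_div_poch]
  have h := tendsto_finsetProd (range k) fun i _ =>
    (tendsto_atTop_add_const_right atTop (i : ℝ)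
      (tendsto_atTop_add_const_left atTop y tendsto_natCast_atTop_atTop)).const_div_atTop (x + i)
  simpa [hk] using h

lemma isBigO_mul_natCast_add (p q : ℝ) :
    (fun n : ℕ => p * n + q) =O[atTop] fun n : ℕ => (n : ℝ) ^ (1 : ℝ) := by
  simp only [Real.rpow_one]
  exact ((isBigO_refl _ _).const_mul_left p).add
    ((isLittleO_const_id_atTop q).comp_tendsto tendsto_natCast_atTop_atTop).isBigO

lemma isBigO_mul_natCast_rpow {f g : ℕ → ℝ} {p q r : ℝ}
    (hf : f =O[atTop] fun n : ℕ => (n : ℝ) ^ p) (hg : g =O[atTop] fun n : ℕ => (n : ℝ) ^ q)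
    (hr : p + q = r) : (fun n => f n * g n) =O[atTop] fun n : ℕ => (n : ℝ) ^ r := by
  refine (hf.mul hg).congr' .rfl ?_
  filter_upwards [eventually_gt_atTop 0] with n hn
  rw [← Real.rpow_add (Nat.cast_pos.2 hn), hr]

/-! ### Very well-poised series -/

lemma tsum_eq_zero_of_telescoping {M : Type*} [AddCommGroup M] [TopologicalSpace M] [T2Space M]
    {f G : ℕ → M} (hf : Summable f) (hfG : ∀ k, f k = G (k + 1) - G k) (hG₀ : G 0 = 0)
    (hG : Tendsto G atTop (𝓝 0)) : ∑' k, f k = 0 := by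
  refine tendsto_nhds_unique hf.tendsto_sum_tsum_nat (hG.congr fun n => ?_)
  simp only [hfG, sum_range_sub, hG₀, sub_zero]

/-- The general term of the well-poised series `₄F₃(a, c, d, e; 1+a-c, 1+a-d, 1+a-e; 1)`, with
`k! = (1)_k` written as a Pochhammer symbol so that the term is a product of quotients
`(x)_k / (y)_k`. -/
noncomputable def wellPoisedTerm (a c d e : ℝ) (k : ℕ) : ℝ :=
  poch c k / poch 1 k * (poch a k / poch (1 + a - c) k) *
    (poch d k / poch (1 + a - d) k) * (poch e k / poch (1 + a - e) k)

/-- The general term of the very well-poised series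
`₅F₄(a, 1+a/2, c, d, e; a/2, 1+a-c, 1+a-d, 1+a-e; 1)`; the factor `1 + 2k/a` is
`(1+a/2)_k / (a/2)_k`. -/
noncomputable def veryWellPoisedTerm (a c d e : ℝ) (k : ℕ) : ℝ :=
  (2 / a * k + 1) * wellPoisedTerm a c d e k

/-- The ratio `R(a)` of the sums of the very well-poised series at `a` and at `a + 1`. -/
noncomputable def dougallRatio (a c d e : ℝ) : ℝ :=
  (1 + a) / (1 + a - c) * ((1 + a - d - e) / (1 + a - d)) * ((1 + a - c - e) / (1 + a - e)) *
    ((1 + a - c - d) / (1 + a - c - d - e))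

/-- The Wilf–Zeilberger certificate: its differences are the terms of the very well-poised series at
`a` minus `dougallRatio a c d e` times those at `a + 1`. -/
noncomputable def dougallCertificate (a c d e : ℝ) (k : ℕ) : ℝ :=
  -(k * (k + (1 + 2 * a - c - d - e)) / (a * (1 + a - c - d - e))) * wellPoisedTerm a c d e k

section Dougall

variable {a c d e : ℝ}

lemma isBigO_wellPoisedTerm (hc : NotNonposInt (1 + a - c)) (hd : NotNonposInt (1 + a - d))
    (he : NotNonposInt (1 + a - e)) :
    wellPoisedTerm a c d e =O[atTop] fun k : ℕ => (k : ℝ) ^ (-2 * (1 + a - c - d - e) - 2) :=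
  have h₁ := isBigO_poch_div_poch c (.of_pos one_pos)
  have h₂ := isBigO_mul_natCast_rpow h₁ (isBigO_poch_div_poch a hc) rfl
  have h₃ := isBigO_mul_natCast_rpow h₂ (isBigO_poch_div_poch d hd) rfl
  isBigO_mul_natCast_rpow h₃ (isBigO_poch_div_poch e he) (by ring)

lemma summable_veryWellPoisedTerm (hc : NotNonposInt (1 + a - c)) (hd : NotNonposInt (1 + a - d))
    (he : NotNonposInt (1 + a - e)) (hs : 0 < 1 + a - c - d - e) :
    Summable (veryWellPoisedTerm a c d e) :=
  summable_of_isBigO_nat (Real.summable_nat_rpow.2 (by linarith))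
    (isBigO_mul_natCast_rpow (isBigO_mul_natCast_add (2 / a) 1) (isBigO_wellPoisedTerm hc hd he)
      rfl)

lemma tendsto_dougallCertificate (hc : NotNonposInt (1 + a - c)) (hd : NotNonposInt (1 + a - d))
    (he : NotNonposInt (1 + a - e)) (hs : 0 < 1 + a - c - d - e) :
    Tendsto (dougallCertificate a c d e) atTop (𝓝 0) := by
  set s := 1 + a - c - d - e
  have h_lim : Tendsto (fun k : ℕ => (k : ℝ) ^ (-(2 * s))) atTop (𝓝 0) :=
    (tendsto_rpow_neg_atTop (by linarith)).comp tendsto_natCast_atTop_atTop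
  have h_weight := isBigO_mul_natCast_rpow (isBigO_mul_natCast_add (-1 / (a * s)) 0)
    (isBigO_mul_natCast_add 1 (1 + 2 * a - c - d - e)) rfl
  have hO := isBigO_mul_natCast_rpow h_weight (isBigO_wellPoisedTerm hc hd he)
    (r := -(2 * s)) (by ring)
  refine (hO.trans_tendsto h_lim).congr fun k => ?_
  rw [dougallCertificate]
  ring

lemma wellPoisedTerm_succ (a c d e : ℝ) (k : ℕ) :
    wellPoisedTerm a c d e (k + 1) = wellPoisedTerm a c d e k *
      ((c + k) / (1 + k) * ((a + k) / (1 + a - c + k)) * ((d + k) / (1 + a - d + k)) *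
        ((e + k) / (1 + a - e + k))) := by
  simp only [wellPoisedTerm, poch_succ, mul_div_mul_comm]
  ring

lemma wellPoisedTerm_add_one (ha : a ≠ 0) (hc : 1 + a - c ≠ 0) (hd : 1 + a - d ≠ 0)
    (he : 1 + a - e ≠ 0) (k : ℕ) :
    wellPoisedTerm (a + 1) c d e k = wellPoisedTerm a c d e k *
      ((a + k) / a * ((1 + a - c) / (1 + a - c + k)) * ((1 + a - d) / (1 + a - d + k)) *
        ((1 + a - e) / (1 + a - e + k))) := by
  have h_shift (x : ℝ) : 1 + (a + 1) - x = 1 + a - x + 1 := by ring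
  simp only [wellPoisedTerm, h_shift, poch_add_one ha, poch_add_one hc, poch_add_one hd,
    poch_add_one he, div_div_eq_mul_div, mul_div_mul_comm]
  ring

lemma veryWellPoisedTerm_sub_eq_dougallCertificate_sub (ha : NotNonposInt a)
    (hc : NotNonposInt (1 + a - c)) (hd : NotNonposInt (1 + a - d))
    (he : NotNonposInt (1 + a - e)) (hs : 1 + a - c - d - e ≠ 0) (k : ℕ) :
    veryWellPoisedTerm a c d e k - dougallRatio a c d e * veryWellPoisedTerm (a + 1) c d e k =
      dougallCertificate a c d e (k + 1) - dougallCertificate a c d e k := by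
  have ha₀ := ha.ne_zero
  have ha₁ := ha.add_one.ne_zero
  have hc₀ := hc.ne_zero
  have hd₀ := hd.ne_zero
  have he₀ := he.ne_zero
  have hck := hc.add_natCast_ne_zero k
  have hdk := hd.add_natCast_ne_zero k
  have hek := he.add_natCast_ne_zero k
  have hk : (1 : ℝ) + k ≠ 0 := by positivity
  simp only [veryWellPoisedTerm, dougallCertificate, dougallRatio, wellPoisedTerm_succ,
    wellPoisedTerm_add_one ha₀ hc₀ hd₀ he₀]
  push_cast
  field_simp
  ring

lemma tsum_veryWellPoisedTerm_eq_mul (ha : NotNonposInt a)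
    (hc : NotNonposInt (1 + a - c)) (hd : NotNonposInt (1 + a - d))
    (he : NotNonposInt (1 + a - e)) (hs : 0 < 1 + a - c - d - e) :
    ∑' k, veryWellPoisedTerm a c d e k =
      dougallRatio a c d e * ∑' k, veryWellPoisedTerm (a + 1) c d e k := by
  have h_sum := summable_veryWellPoisedTerm hc hd he hs
  have h_sum_add_one : Summable (veryWellPoisedTerm (a + 1) c d e) := by
    refine summable_veryWellPoisedTerm ?_ ?_ ?_ (by linarith)
    · convert hc.add_one using 1; ring
    · convert hd.add_one using 1; ring
    · convert he.add_one using 1; ring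
  have h_zero := tsum_eq_zero_of_telescoping (h_sum.sub (h_sum_add_one.mul_left _))
    (veryWellPoisedTerm_sub_eq_dougallCertificate_sub ha hc hd he hs.ne')
    (by simp [dougallCertificate]) (tendsto_dougallCertificate hc hd he hs)
  rw [h_sum.tsum_sub (h_sum_add_one.mul_left _), tsum_mul_left] at h_zero
  exact sub_eq_zero.1 h_zero

/-- The product `R(a) R(a+1) ⋯ R(a+n-1)` of consecutive values of `dougallRatio`, in closed form. -/
noncomputable def dougallProduct (a c d e : ℝ) (n : ℕ) : ℝ :=
  poch (1 + a) n / poch (1 + a - c) n * (poch (1 + a - d - e) n / poch (1 + a - d) n) *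
    (poch (1 + a - c - e) n / poch (1 + a - e) n) *
    (poch (1 + a - c - d) n / poch (1 + a - c - d - e) n)

lemma dougallProduct_succ (a c d e : ℝ) (n : ℕ) :
    dougallProduct a c d e (n + 1) = dougallProduct a c d e n * dougallRatio (a + n) c d e := by
  simp only [dougallProduct, dougallRatio, poch_succ, mul_div_mul_comm, ← add_assoc,
    add_sub_right_comm _ (n : ℝ)]
  ring

lemma tsum_veryWellPoisedTerm_eq_dougallProduct_mul (ha : NotNonposInt a)
    (hc : NotNonposInt (1 + a - c)) (hd : NotNonposInt (1 + a - d))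
    (he : NotNonposInt (1 + a - e)) (hs : 0 < 1 + a - c - d - e) (n : ℕ) :
    ∑' k, veryWellPoisedTerm a c d e k =
      dougallProduct a c d e n * ∑' k, veryWellPoisedTerm (a + n) c d e k := by
  induction n with
  | zero => simp [dougallProduct, poch_zero]
  | succ n ih =>
    have h_shift (x : ℝ) : 1 + (a + n) - x = 1 + a - x + n := by ring
    have h_rec : ∑' k, veryWellPoisedTerm (a + n) c d e k =
        dougallRatio (a + n) c d e * ∑' k, veryWellPoisedTerm (a + n + 1) c d e k := by
      refine tsum_veryWellPoisedTerm_eq_mul (ha.add_natCast n) ?_ ?_ ?_ ?_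
      · exact h_shift c ▸ hc.add_natCast n
      · exact h_shift d ▸ hd.add_natCast n
      · exact h_shift e ▸ he.add_natCast n
      · linarith [n.cast_nonneg (α := ℝ)]
    rw [ih, h_rec, dougallProduct_succ, mul_assoc]
    push_cast
    rw [add_assoc]

lemma tendsto_dougallProduct (hc : NotNonposInt (1 + a - c))
    (hd : NotNonposInt (1 + a - d)) (he : NotNonposInt (1 + a - e))
    (hs : NotNonposInt (1 + a - c - d - e)) :
    Tendsto (dougallProduct a c d e) atTop
      (𝓝 (Gamma (1 + a - c) / Gamma (1 + a) * (Gamma (1 + a - d) / Gamma (1 + a - d - e)) *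
        (Gamma (1 + a - e) / Gamma (1 + a - c - e)) *
        (Gamma (1 + a - c - d - e) / Gamma (1 + a - c - d)))) := by
  have h := (((tendsto_rpow_mul_poch_div_poch (1 + a) hc).mul
    (tendsto_rpow_mul_poch_div_poch (1 + a - d - e) hd)).mul
    (tendsto_rpow_mul_poch_div_poch (1 + a - c - e) he)).mul
    (tendsto_rpow_mul_poch_div_poch (1 + a - c - d) hs)
  refine h.congr' ?_
  filter_upwards [eventually_gt_atTop 0] with n hn
  have hn_pos : (0 : ℝ) < n := by positivity
  have h_rpow : (n : ℝ) ^ (1 + a - c - (1 + a)) * (n : ℝ) ^ (1 + a - d - (1 + a - d - e)) *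
      (n : ℝ) ^ (1 + a - e - (1 + a - c - e)) *
      (n : ℝ) ^ (1 + a - c - d - e - (1 + a - c - d)) = 1 := by
    simp only [← Real.rpow_add hn_pos]
    ring_nf
    exact Real.rpow_zero _
  linear_combination (norm := (rw [dougallProduct]; ring)) dougallProduct a c d e n * h_rpow

lemma abs_veryWellPoisedTerm_le {b b₀ C D E : ℝ} (hC : 1 ≤ C) (hcC : |c| ≤ C) (hdD : |d| ≤ D)
    (heE : |e| ≤ E) (hb₀ : C + D + E ≤ b₀) (hb : b₀ ≤ b) (k : ℕ) :
    |veryWellPoisedTerm b c d e k| ≤ veryWellPoisedTerm b₀ C D E k := by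
  have hD := (abs_nonneg d).trans hdD
  have hE := (abs_nonneg e).trans heE
  have hb₀_pos : 0 < b₀ := by linarith
  have hb_pos : 0 < b := by linarith
  have h_weight : |2 / b * k + 1| ≤ 2 / b₀ * k + 1 := by
    rw [abs_of_nonneg (by positivity)]
    gcongr
  have h_factor (i : ℕ) : |(b + i) / (1 + b - c + i)| ≤ (b₀ + i) / (1 + b₀ - C + i) := by
    have : (0 : ℝ) ≤ i := i.cast_nonneg
    have hc_le := (le_abs_self c).trans hcC
    have hden : 0 < 1 + b - c + i := by linarith
    rw [abs_of_nonneg (by positivity), div_le_div_iff₀ hden (by linarith)]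
    nlinarith [mul_nonneg (sub_nonneg.2 hC) (sub_nonneg.2 hb),
      mul_nonneg (sub_nonneg.2 hc_le) (by positivity : 0 ≤ b₀ + i)]
  simp only [veryWellPoisedTerm, wellPoisedTerm, abs_mul]
  have hc_nonneg := (abs_nonneg _).trans (abs_poch_div_poch_le hcC one_pos le_rfl k)
  have hb_nonneg := (abs_nonneg _).trans (abs_poch_div_poch_le_of_forall h_factor k)
  have hd_le := abs_poch_div_poch_le (y := 1 + b - d) (Y := 1 + b₀ - D) hdD (by linarith)
    (by linarith [le_abs_self d]) k
  have he_le := abs_poch_div_poch_le (y := 1 + b - e) (Y := 1 + b₀ - E) heE (by linarith)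
    (by linarith [le_abs_self e]) k
  have hd_nonneg := (abs_nonneg _).trans hd_le
  gcongr
  · exact abs_poch_div_poch_le hcC one_pos le_rfl k
  · exact abs_poch_div_poch_le_of_forall h_factor k

lemma tendsto_veryWellPoisedTerm_add_natCast (a c d e : ℝ) (k : ℕ) :
    Tendsto (fun n : ℕ => veryWellPoisedTerm (a + n) c d e k) atTop
      (𝓝 (if k = 0 then 1 else 0)) := by
  rcases eq_or_ne k 0 with rfl | hk
  · simp [veryWellPoisedTerm, wellPoisedTerm, poch_zero]
  rw [if_neg hk]
  have h_shift (x : ℝ) (n : ℕ) : 1 + (a + n) - x = 1 + a - x + n := by ring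
  have h_weight : Tendsto (fun n : ℕ => 2 / (a + n) * k + 1) atTop (𝓝 (0 * k + 1)) :=
    (((tendsto_atTop_add_const_left atTop a tendsto_natCast_atTop_atTop).const_div_atTop
      2).mul_const _).add_const 1
  have h := h_weight.mul ((((tendsto_poch_add_natCast_div a (1 + a - c) k).const_mul
    (poch c k / poch 1 k)).mul (tendsto_poch_div_poch_add_natCast d (1 + a - d) hk)).mul
    (tendsto_poch_div_poch_add_natCast e (1 + a - e) hk))
  simpa only [veryWellPoisedTerm, wellPoisedTerm, h_shift, mul_zero] using h

lemma tendsto_tsum_veryWellPoisedTerm_add_natCast (a c d e : ℝ) :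
    Tendsto (fun n : ℕ => ∑' k, veryWellPoisedTerm (a + n) c d e k) atTop (𝓝 1) := by
  set C := |c| + 1
  set b₀ := C + |d| + |e|
  have hC : 1 ≤ C := le_add_of_nonneg_left (abs_nonneg c)
  have hd := abs_nonneg d
  have he := abs_nonneg e
  have h_bound : Summable (veryWellPoisedTerm b₀ C |d| |e|) :=
    summable_veryWellPoisedTerm (.of_pos (by linarith)) (.of_pos (by linarith))
      (.of_pos (by linarith)) (by linarith)
  have h_large : ∀ᶠ n : ℕ in atTop, b₀ ≤ a + n :=
    (tendsto_atTop_add_const_left _ a tendsto_natCast_atTop_atTop).eventually_ge_atTop b₀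
  rw [← tsum_ite_eq (0 : ℕ) (fun _ => (1 : ℝ))]
  refine tendsto_tsum_of_dominated_convergence h_bound
    (tendsto_veryWellPoisedTerm_add_natCast a c d e) (h_large.mono fun n hn k => ?_)
  exact abs_veryWellPoisedTerm_le hC (le_add_of_nonneg_right zero_le_one) le_rfl le_rfl le_rfl hn k

/-- **Dougall's `₅F₄` summation theorem**. -/
theorem hasSum_veryWellPoisedTerm (ha : NotNonposInt a)
    (hc : NotNonposInt (1 + a - c)) (hd : NotNonposInt (1 + a - d))
    (he : NotNonposInt (1 + a - e)) (hs : 0 < 1 + a - c - d - e) :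
    HasSum (veryWellPoisedTerm a c d e)
      (Gamma (1 + a - c) / Gamma (1 + a) * (Gamma (1 + a - d) / Gamma (1 + a - d - e)) *
        (Gamma (1 + a - e) / Gamma (1 + a - c - e)) *
        (Gamma (1 + a - c - d - e) / Gamma (1 + a - c - d))) := by
  have h_lim := (tendsto_dougallProduct hc hd he (.of_pos hs)).mul
    (tendsto_tsum_veryWellPoisedTerm_add_natCast a c d e)
  simp only [← tsum_veryWellPoisedTerm_eq_dougallProduct_mul ha hc hd he hs, mul_one] at h_lim
  rw [← tendsto_nhds_unique tendsto_const_nhds h_lim]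
  exact (summable_veryWellPoisedTerm hc hd he hs).hasSum

end Dougall

/-! ### The series with the factor `(1+λ)_k / (λ)_k` -/

lemma poch_one_add_div_poch {x : ℝ} (hx : NotNonposInt x) (k : ℕ) :
    poch (1 + x) k / poch x k = 1 + k / x := by
  have h₀ := hx.ne_zero
  have hk := hx.poch_ne_zero k
  rw [add_comm 1 x, poch_add_one h₀]
  field_simp

/-- The general term of Dixon's series `₃F₂(a, c, e; 1+a-c, 1+a-e; 1)`. -/
noncomputable def dixonTerm (a c e : ℝ) (k : ℕ) : ℝ :=
  poch a k * poch c k * poch e k / (poch (1 + a - c) k * poch (1 + a - e) k * k.factorial)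

section Dixon

variable {a c e : ℝ}

lemma veryWellPoisedTerm_one_add_div_two (ha : NotNonposInt ((1 + a) / 2)) (c e : ℝ) (k : ℕ) :
    veryWellPoisedTerm a c ((1 + a) / 2) e k = (2 / a * k + 1) * dixonTerm a c e k := by
  rw [veryWellPoisedTerm, wellPoisedTerm, dixonTerm, poch_one,
    show 1 + a - (1 + a) / 2 = (1 + a) / 2 by ring, div_self (ha.poch_ne_zero k)]
  ring

lemma veryWellPoisedTerm_div_two (ha : NotNonposInt (a / 2)) (c e : ℝ) (k : ℕ) :
    veryWellPoisedTerm a c (a / 2) e k = dixonTerm a c e k := by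
  have h_weight : 2 / a * k + 1 = poch (1 + a / 2) k / poch (a / 2) k := by
    rw [poch_one_add_div_poch ha, div_div_eq_mul_div]
    ring
  have h₁ : poch (1 + a / 2) k ≠ 0 := add_comm (a / 2) 1 ▸ ha.add_one.poch_ne_zero k
  have h_cancel : poch (1 + a / 2) k / poch (a / 2) k * (poch (a / 2) k / poch (1 + a / 2) k) = 1 :=
    div_mul_div_cancel₀ (ha.poch_ne_zero k) |>.trans (div_self h₁)
  rw [veryWellPoisedTerm, h_weight, wellPoisedTerm, dixonTerm, poch_one,
    show 1 + a - a / 2 = 1 + a / 2 by ring]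
  linear_combination (poch c k / k.factorial * (poch a k / poch (1 + a - c) k) *
    (poch e k / poch (1 + a - e) k)) * h_cancel

theorem hasSum_weighted_dixonTerm (ha : NotNonposInt a) (hc : NotNonposInt (1 + a - c))
    (he : NotNonposInt (1 + a - e)) (hs : 0 < (1 + a) / 2 - c - e) :
    HasSum (fun k : ℕ => (2 / a * k + 1) * dixonTerm a c e k)
      (1 / a * (Gamma (1 + a - c) * Gamma (1 + a - e) / (Gamma a * Gamma (1 + a - c - e)) *
        (Gamma ((1 + a) / 2) * Gamma ((1 + a) / 2 - c - e) /
          (Gamma ((1 + a) / 2 - c) * Gamma ((1 + a) / 2 - e))))) := by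
  have ha_half : NotNonposInt ((1 + a) / 2) := by simpa [add_comm] using ha.add_natCast_div_two 1
  have hd : 1 + a - (1 + a) / 2 = (1 + a) / 2 := by ring
  have h := hasSum_veryWellPoisedTerm (d := (1 + a) / 2) ha hc (by rwa [hd]) he (by linarith)
  rw [funext (veryWellPoisedTerm_one_add_div_two ha_half c e)] at h
  convert! h using 1
  rw [hd, show 1 + a - c - (1 + a) / 2 - e = (1 + a) / 2 - c - e by ring,
    show 1 + a - c - (1 + a) / 2 = (1 + a) / 2 - c by ring, add_comm 1 a,
    Real.Gamma_add_one ha.ne_zero]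
  ring

/-- **Dixon's summation theorem**. -/
theorem hasSum_dixonTerm (ha : NotNonposInt a) (hc : NotNonposInt (1 + a - c))
    (he : NotNonposInt (1 + a - e)) (hs : 0 < (2 + a) / 2 - c - e) :
    HasSum (dixonTerm a c e)
      (1 / 2 * (Gamma (1 + a - c) * Gamma (1 + a - e) / (Gamma a * Gamma (1 + a - c - e)) *
        (Gamma (a / 2) * Gamma ((2 + a) / 2 - c - e) /
          (Gamma ((2 + a) / 2 - c) * Gamma ((2 + a) / 2 - e))))) := by
  have ha_half : NotNonposInt (a / 2) := by simpa using ha.add_natCast_div_two 0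
  have hd : 1 + a - a / 2 = a / 2 + 1 := by ring
  have h := hasSum_veryWellPoisedTerm (d := a / 2) ha hc (by simpa only [hd] using ha_half.add_one)
    he (by linarith)
  rw [funext (veryWellPoisedTerm_div_two ha_half c e)] at h
  have h_Gamma : Gamma (a / 2 + 1) / Gamma (1 + a) = 1 / 2 * (Gamma (a / 2) / Gamma a) := by
    have ha₀ := ha.ne_zero
    rw [add_comm 1 a, Real.Gamma_add_one ha_half.ne_zero, Real.Gamma_add_one ha₀]
    field_simp
  convert! h using 1
  rw [show 1 + a - c - a / 2 - e = (2 + a) / 2 - c - e by ring,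
    show 1 + a - c - a / 2 = (2 + a) / 2 - c by ring,
    show 1 + a - a / 2 - e = (2 + a) / 2 - e by ring, hd]
  linear_combination -(Gamma (1 + a - c) * Gamma (1 + a - e) / Gamma (1 + a - c - e) *
    (Gamma ((2 + a) / 2 - c - e) / (Gamma ((2 + a) / 2 - c) * Gamma ((2 + a) / 2 - e)))) * h_Gamma

end Dixon

theorem stmt_8_general (a c e lam : ℝ)
    (hconv : 0 < (1 + a) / 2 - c - e)
    (hc : NotNonposInt (1 + a - c))
    (he : NotNonposInt (1 + a - e))
    (hlam : NotNonposInt lam)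
    (ha : NotNonposInt a) :
    HasSum (fun k : ℕ => poch a k * poch c k * poch e k * poch (1 + lam) k /
        (poch (1 + a - c) k * poch (1 + a - e) k * poch lam k * k.factorial))
      ((Gamma (1 + a - c) * Gamma (1 + a - e) / (Gamma a * Gamma (1 + a - c - e)))
        * ((1 / (2 * lam)) *
            (Gamma ((1 + a) / 2) * Gamma ((1 + a) / 2 - c - e) /
              (Gamma ((1 + a) / 2 - c) * Gamma ((1 + a) / 2 - e)))
          + ((2 * lam - a) / (4 * lam)) *
            (Gamma (a / 2) * Gamma ((2 + a) / 2 - c - e) /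
              (Gamma ((2 + a) / 2 - c) * Gamma ((2 + a) / 2 - e))))) := by
  have ha₀ := ha.ne_zero
  have hlam₀ := hlam.ne_zero
  have h_weight (k : ℕ) : poch (1 + lam) k / poch lam k =
      a / (2 * lam) * (2 / a * k + 1) + (1 - a / (2 * lam)) := by
    rw [poch_one_add_div_poch hlam]
    field_simp
    ring
  convert! ((hasSum_weighted_dixonTerm ha hc he hconv).mul_left (a / (2 * lam))).add
    ((hasSum_dixonTerm ha hc he (by linarith)).mul_left (1 - a / (2 * lam))) using 1
  · ext k
    rw [dixonTerm]
    linear_combination (poch a k * poch c k * poch e k /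
      (poch (1 + a - c) k * poch (1 + a - e) k * k.factorial)) * h_weight k
  · have h₁ : a / (2 * lam) * (1 / a) = 1 / (2 * lam) := by field_simp
    have h₂ : (1 - a / (2 * lam)) * (1 / 2) = (2 * lam - a) / (4 * lam) := by
      field_simp
      ring
    rw [← h₁, ← h₂]
    ring

/-- Equation (6): evaluation of the nonterminating
`₄F₃(a, c, e, 1+λ; 1+a-c, 1+a-e, λ; 1)` series with an extra linear factor. -/
theorem stmt_8 (a c e lam : ℝ)
    (hlam : lam ≠ 0)
    (hconv : a / 2 - c - e > 0)
    (h1 : NotNonposInt (1 + a - c))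
    (h2 : NotNonposInt (1 + a - e))
    (h3 : NotNonposInt lam)
    (g1 : NotNonposInt a)
    (g2 : NotNonposInt (1 + a - c - e))
    (g3 : NotNonposInt ((1 + a) / 2))
    (g4 : NotNonposInt ((1 + a) / 2 - c - e))
    (g5 : NotNonposInt ((1 + a) / 2 - c))
    (g6 : NotNonposInt ((1 + a) / 2 - e))
    (g7 : NotNonposInt (a / 2))
    (g8 : NotNonposInt ((2 + a) / 2 - c - e))
    (g9 : NotNonposInt ((2 + a) / 2 - c))
    (g10 : NotNonposInt ((2 + a) / 2 - e)) :
    ∑' k : ℕ, poch a k * poch c k * poch e k * poch (1 + lam) k /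
        (poch (1 + a - c) k * poch (1 + a - e) k * poch lam k * k.factorial)
      = (Real.Gamma (1 + a - c) * Real.Gamma (1 + a - e) /
          (Real.Gamma a * Real.Gamma (1 + a - c - e)))
        * ((1 / (2 * lam)) *
            (Real.Gamma ((1 + a) / 2) * Real.Gamma ((1 + a) / 2 - c - e) /
              (Real.Gamma ((1 + a) / 2 - c) * Real.Gamma ((1 + a) / 2 - e)))
          + ((2 * lam - a) / (4 * lam)) *
            (Real.Gamma (a / 2) * Real.Gamma ((2 + a) / 2 - c - e) /
              (Real.Gamma ((2 + a) / 2 - c) * Real.Gamma ((2 + a) / 2 - e)))) :=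
  (stmt_8_general a c e lam (by linarith) h1 h2 h3 g1).tsum_eq
end

section
/- Let n be a natural number and let a, c be real numbers such that (c)_n ≠ 0. Then ∑_{k=0}^{n} (−1)^k · binom(n,k) · (a)_k (a)_{n−k} / ((c)_k (c)_{n−k}) equals χ(n even) · (n!/(c)_n) · (a)_{⌊n/2⌋} (c−a)_{⌊n/2⌋} / ((1)_{⌊n/2⌋} (c)_{⌊n/2⌋}). -/
/-!
The sum is `n!` times the coefficient of `xⁿ` in `F(-x) F(x)`, where `F = ₁F₁(a; c; x)`. This
product is even in `x`, so its odd coefficients vanish. Kummer's transformation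
`₁F₁(c - a; c; x) = eˣ ₁F₁(a; c; -x)` shows that it is invariant under `a ↦ c - a`. For `n = 2m` the
coefficient is a polynomial in `a` of degree at most `2m`. At `a = -i` the series `F` terminates in
degree `i`, so the coefficient vanishes for `i < m` and has a single summand for `i = m`; by the
symmetry it also vanishes at `a = c + j` for `j < m`. These `2m + 1` points are distinct because
`(c)_{2m} ≠ 0`, and interpolation there identifies the coefficient.
-/

section ConfluentSeries

open Finset Nat PowerSeries
open scoped Polynomial

section CommRing

variable {R : Type*} [CommRing R]

theorem eval_ascPochhammer_add (x : R) (m n : ℕ) :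
    (ascPochhammer R (m + n)).eval x =
      (ascPochhammer R m).eval x * (ascPochhammer R n).eval (x + m) := by
  simp [← ascPochhammer_mul]

theorem eval_ascPochhammer_ne_zero_of_le {c : R} {m n : ℕ} (hmn : m ≤ n)
    (hc : (ascPochhammer R n).eval c ≠ 0) : (ascPochhammer R m).eval c ≠ 0 := by
  obtain ⟨k, rfl⟩ := Nat.exists_eq_add_of_le hmn
  exact left_ne_zero_of_mul (eval_ascPochhammer_add c m k ▸ hc)

theorem eval_ascPochhammer_neg_self (n : ℕ) :
    (ascPochhammer R n).eval (-(n : R)) = (-1) ^ n * n ! := by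
  rw [ascPochhammer_eval_neg_eq_descPochhammer, descPochhammer_eval_eq_descFactorial,
    Nat.descFactorial_self]

theorem eval_ascPochhammer_sub (a c : R) (n : ℕ) :
    (ascPochhammer R n).eval (c - a) =
      ∑ ij ∈ antidiagonal n, (-1) ^ ij.1 * n.choose ij.1 *
        ((ascPochhammer R ij.1).eval a * (ascPochhammer R ij.2).eval (c + ij.1)) := by
  have desc_eq (x : R) (k : ℕ) :
      (descPochhammer ℤ k).smeval x = (ascPochhammer R k).eval (x - k + 1) := by
    rw [Polynomial.descPochhammer_smeval_eq_ascPochhammer,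
      Polynomial.ascPochhammer_smeval_eq_eval]
  have desc_neg (k : ℕ) :
      (descPochhammer ℤ k).smeval (-a) = (-1) ^ k * (ascPochhammer R k).eval a := by
    rw [← neg_neg a, ascPochhammer_eval_neg_eq_descPochhammer,
      descPochhammer_eval_eq_ascPochhammer, ← desc_eq, neg_neg, ← mul_assoc,
      ← mul_pow, neg_one_mul, neg_neg, one_pow, one_mul]
  -- `(c + i)ⱼ` with `i + j = n` is the descending factorial of `c + n - 1` of length `j`.
  have vandermonde := Ring.descPochhammer_smeval_add n (Commute.all (-a) (c + n - 1))
  rw [desc_eq, show -a + (c + n - 1) - n + 1 = c - a by ring] at vandermonde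
  rw [vandermonde]
  refine sum_congr rfl fun ⟨i, j⟩ hij ↦ ?_
  obtain rfl : i + j = n := mem_antidiagonal.mp hij
  rw [desc_neg, desc_eq, show c + (i + j : ℕ) - 1 - j + 1 = c + i by push_cast; ring]
  ring

theorem natDegree_ascPochhammer_mul_comp_sub_le [IsDomain R] (c : R) (n : ℕ) :
    (ascPochhammer R n *
      (ascPochhammer R n).comp (Polynomial.C c - Polynomial.X)).natDegree ≤ 2 * n := by
  have natDegree_sub_le : (Polynomial.C c - Polynomial.X).natDegree ≤ 1 :=
    Polynomial.natDegree_sub_le_of_le (Polynomial.natDegree_C c).le Polynomial.natDegree_X_le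
  calc
    _ ≤ (ascPochhammer R n).natDegree +
        (ascPochhammer R n).natDegree * (Polynomial.C c - Polynomial.X).natDegree :=
      Polynomial.natDegree_mul_le.trans (Nat.add_le_add_left Polynomial.natDegree_comp_le _)
    _ ≤ n + n * 1 := by
      rw [ascPochhammer_natDegree]
      gcongr
    _ = 2 * n := by ring

theorem evalNegHom_evalNegHom (f : R⟦X⟧) : evalNegHom (evalNegHom f) = f := by
  simp [evalNegHom, rescale_rescale]

theorem coeff_evalNegHom (f : R⟦X⟧) (n : ℕ) :
    coeff n (evalNegHom f) = (-1) ^ n * coeff n f :=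
  coeff_rescale f (-1) n

theorem coeff_evalNegHom_mul_self_of_odd [IsDomain R] [CharZero R] (f : R⟦X⟧) {n : ℕ}
    (hn : Odd n) : coeff n (evalNegHom f * f) = 0 := by
  have even_product : evalNegHom (evalNegHom f * f) = evalNegHom f * f := by
    rw [map_mul, evalNegHom_evalNegHom, mul_comm]
  have coeff_eq_neg := coeff_evalNegHom (evalNegHom f * f) n
  rw [even_product, hn.neg_one_pow, neg_one_mul] at coeff_eq_neg
  exact self_eq_neg.mp coeff_eq_neg

end CommRing

variable {K : Type*} [Field K]

/-- Kummer's confluent hypergeometric series `₁F₁(a; c; x) = ∑ (a)ₙ / ((c)ₙ n!) xⁿ`. A coefficient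
with `(c)ₙ = 0` is `0`, so only the coefficients with `(c)ₙ ≠ 0` are meaningful. -/
noncomputable def confluentSeries (a c : K) : K⟦X⟧ :=
  PowerSeries.mk fun n ↦ (ascPochhammer K n).eval a / ((ascPochhammer K n).eval c * n !)

theorem coeff_confluentSeries (a c : K) (n : ℕ) :
    coeff n (confluentSeries a c) =
      (ascPochhammer K n).eval a / ((ascPochhammer K n).eval c * n !) :=
  coeff_mk n _

theorem coeff_confluentSeries_neg_natCast_of_lt (c : K) {i n : ℕ} (h : i < n) :
    coeff n (confluentSeries (-(i : K)) c) = 0 := by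
  rw [coeff_confluentSeries, ascPochhammer_eval_neg_coe_nat_of_lt h, zero_div]

/-- The product `₁F₁(a; c; -x) ₁F₁(a; c; x)` of Bailey's formula. -/
noncomputable def confluentProduct (a c : K) : K⟦X⟧ :=
  evalNegHom (confluentSeries a c) * confluentSeries a c

theorem coeff_confluentProduct (a c : K) (n : ℕ) :
    coeff n (confluentProduct a c) =
      ∑ ij ∈ antidiagonal n, (-1) ^ ij.1 *
        (coeff ij.1 (confluentSeries a c) * coeff ij.2 (confluentSeries a c)) := by
  simp only [confluentProduct, coeff_mul, coeff_evalNegHom, mul_assoc]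

theorem coeff_confluentProduct_neg_natCast_of_lt (c : K) {i n : ℕ} (h : 2 * i < n) :
    coeff n (confluentProduct (-(i : K)) c) = 0 := by
  rw [coeff_confluentProduct]
  refine sum_eq_zero fun ⟨k, l⟩ hkl ↦ ?_
  have hkl : k + l = n := mem_antidiagonal.mp hkl
  obtain hk | hl : i < k ∨ i < l := by lia
  · simp only [coeff_confluentSeries_neg_natCast_of_lt c hk, zero_mul, mul_zero]
  · simp only [coeff_confluentSeries_neg_natCast_of_lt c hl, mul_zero]

/-- The coefficient of `xⁿ` in `confluentProduct a c` as a polynomial in the parameter `a`. -/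
noncomputable def confluentProductPolynomial (c : K) (n : ℕ) : K[X] :=
  ∑ ij ∈ antidiagonal n,
    Polynomial.C ((-1) ^ ij.1 /
        (((ascPochhammer K ij.1).eval c * ij.1 !) * ((ascPochhammer K ij.2).eval c * ij.2 !))) *
      (ascPochhammer K ij.1 * ascPochhammer K ij.2)

theorem eval_confluentProductPolynomial (a c : K) (n : ℕ) :
    (confluentProductPolynomial c n).eval a = coeff n (confluentProduct a c) := by
  simp only [confluentProductPolynomial, Polynomial.eval_finsetSum, Polynomial.eval_mul,
    Polynomial.eval_C, coeff_confluentProduct, coeff_confluentSeries]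
  exact sum_congr rfl fun ij _ ↦ by ring

theorem natDegree_confluentProductPolynomial_le (c : K) (n : ℕ) :
    (confluentProductPolynomial c n).natDegree ≤ n := by
  refine Polynomial.natDegree_sum_le_of_forall_le _ _ fun ij hij ↦ ?_
  calc
    _ ≤ (ascPochhammer K ij.1 * ascPochhammer K ij.2).natDegree := Polynomial.natDegree_C_mul_le _ _
    _ ≤ ij.1 + ij.2 := by
      simpa only [ascPochhammer_natDegree] using
        Polynomial.natDegree_mul_le (p := ascPochhammer K ij.1) (q := ascPochhammer K ij.2)
    _ = n := mem_antidiagonal.mp hij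

variable [CharZero K]

theorem coeff_confluentProduct_of_odd (a c : K) {n : ℕ} (hn : Odd n) :
    coeff n (confluentProduct a c) = 0 :=
  coeff_evalNegHom_mul_self_of_odd _ hn

theorem coeff_confluentSeries_sub {a c : K} {n : ℕ} (hc : (ascPochhammer K n).eval c ≠ 0) :
    coeff n (confluentSeries (c - a) c) =
      coeff n (exp K * evalNegHom (confluentSeries a c)) := by
  rw [mul_comm, coeff_mul, coeff_confluentSeries, eval_ascPochhammer_sub, sum_div]
  refine sum_congr rfl fun ⟨i, j⟩ hij ↦ ?_
  obtain rfl : i + j = n := mem_antidiagonal.mp hij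
  rw [eval_ascPochhammer_add] at hc ⊢
  have hci := left_ne_zero_of_mul hc
  have hcj := right_ne_zero_of_mul hc
  rw [coeff_evalNegHom, coeff_confluentSeries, coeff_exp, Nat.cast_add_choose]
  simp only [map_div₀, map_one, map_natCast]
  field_simp [Nat.factorial_ne_zero]

theorem coeff_evalNegHom_confluentSeries_sub {a c : K} {n : ℕ}
    (hc : (ascPochhammer K n).eval c ≠ 0) :
    coeff n (evalNegHom (confluentSeries (c - a) c)) =
      coeff n (evalNegHom (exp K) * confluentSeries a c) := by
  rw [coeff_evalNegHom, coeff_confluentSeries_sub hc, ← coeff_evalNegHom, map_mul,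
    evalNegHom_evalNegHom]

theorem coeff_confluentProduct_sub {a c : K} {n : ℕ} (hc : (ascPochhammer K n).eval c ≠ 0) :
    coeff n (confluentProduct (c - a) c) = coeff n (confluentProduct a c) := by
  set F := confluentSeries a c
  calc
    _ = coeff n ((evalNegHom (exp K) * F) * (exp K * evalNegHom F)) := by
      simp only [confluentProduct, coeff_mul n (evalNegHom _), coeff_mul n (evalNegHom _ * _)]
      refine sum_congr rfl fun ij hij ↦ ?_
      have hci := eval_ascPochhammer_ne_zero_of_le
        (Finset.HasAntidiagonal.antidiagonal.fst_le hij) hc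
      have hcj := eval_ascPochhammer_ne_zero_of_le
        (Finset.HasAntidiagonal.antidiagonal.snd_le hij) hc
      rw [coeff_evalNegHom_confluentSeries_sub hci, coeff_confluentSeries_sub hcj]
    _ = coeff n ((exp K * evalNegHom (exp K)) * (evalNegHom F * F)) := by ring_nf
    _ = coeff n (evalNegHom F * F) := by rw [exp_mul_exp_neg_eq_one, one_mul]

theorem coeff_confluentProduct_add_natCast_of_lt {c : K} {j n : ℕ}
    (hc : (ascPochhammer K n).eval c ≠ 0) (h : 2 * j < n) :
    coeff n (confluentProduct (c + j) c) = 0 := by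
  rw [← coeff_confluentProduct_sub hc, sub_add_cancel_left,
    coeff_confluentProduct_neg_natCast_of_lt c h]

theorem coeff_two_mul_confluentProduct_neg_natCast (c : K) (m : ℕ) :
    coeff (2 * m) (confluentProduct (-(m : K)) c) =
      (-1) ^ m / (ascPochhammer K m).eval c ^ 2 := by
  rw [coeff_confluentProduct, sum_eq_single_of_mem (m, m)]
  · rw [coeff_confluentSeries, eval_ascPochhammer_neg_self]
    have hm_factorial : (m ! : K) ≠ 0 := Nat.cast_ne_zero.mpr m.factorial_ne_zero
    rw [mul_div_mul_right _ _ hm_factorial, ← sq, div_pow, ← pow_mul, mul_comm m 2, pow_mul,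
      neg_one_sq, one_pow, mul_one_div]
  · exact mem_antidiagonal.mpr (two_mul m).symm
  · rintro ⟨i, j⟩ hij hne
    have hij : i + j = 2 * m := mem_antidiagonal.mp hij
    have hne : i ≠ m ∨ j ≠ m := by rwa [Ne, Prod.mk.injEq, not_and_or] at hne
    obtain hi | hj : m < i ∨ m < j := by lia
    · simp only [coeff_confluentSeries_neg_natCast_of_lt c hi, zero_mul, mul_zero]
    · simp only [coeff_confluentSeries_neg_natCast_of_lt c hj, mul_zero]

/-- The interpolation nodes `-i` and `c + j` at which `confluentProductPolynomial` is evaluated; the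
left summand of the index type indexes the nodes `-i`. -/
def confluentNode (c : K) : ℕ ⊕ ℕ → K :=
  Sum.elim (fun i ↦ -(i : K)) (fun j ↦ c + j)

theorem injOn_confluentNode {c : K} {m : ℕ} (hc : (ascPochhammer K (2 * m)).eval c ≠ 0) :
    Set.InjOn (confluentNode c) ((range (m + 1)).disjSum (range m)) := by
  have neg_ne_add {i j : ℕ} (hi : i < m + 1) (hj : j < m) : -(i : K) ≠ c + j := by
    intro h
    refine hc ((ascPochhammer_eval_eq_zero_iff _ _).mpr ⟨i + j, by lia, ?_⟩)
    push_cast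
    linear_combination -h
  rintro (i | i) hi (j | j) hj h <;>
    simp only [mem_coe, inl_mem_disjSum, inr_mem_disjSum, mem_range] at hi hj <;>
    simp only [confluentNode, Sum.elim_inl, Sum.elim_inr] at h
  · rw [Nat.cast_injective (neg_injective h)]
  · exact absurd h (neg_ne_add hi hj)
  · exact absurd h.symm (neg_ne_add hj hi)
  · rw [Nat.cast_injective (add_left_cancel h)]

theorem confluentProductPolynomial_two_mul {c : K} {m : ℕ}
    (hc : (ascPochhammer K (2 * m)).eval c ≠ 0) :
    confluentProductPolynomial c (2 * m) =
      Polynomial.C ((ascPochhammer K (2 * m)).eval c * (m ! * (ascPochhammer K m).eval c))⁻¹ *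
        (ascPochhammer K m * (ascPochhammer K m).comp (Polynomial.C c - Polynomial.X)) := by
  have degree_lt {p : K[X]} (hp : p.natDegree ≤ 2 * m) :
      p.degree < #((range (m + 1)).disjSum (range m)) := by
    refine (Polynomial.degree_le_of_natDegree_le hp).trans_lt (Nat.cast_lt.mpr ?_)
    rw [card_disjSum, card_range, card_range]
    lia
  apply Polynomial.eq_of_degrees_lt_of_eval_index_eq _ (injOn_confluentNode hc)
  · exact degree_lt (natDegree_confluentProductPolynomial_le c (2 * m))
  · exact degree_lt <| (Polynomial.natDegree_C_mul_le _ _).trans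
      (natDegree_ascPochhammer_mul_comp_sub_le c m)
  · rintro (i | j) hij
    · obtain hi | rfl : i < m ∨ i = m := by
        simpa only [inl_mem_disjSum, mem_range, Nat.lt_succ_iff_lt_or_eq] using hij
      · have h2i : 2 * i < 2 * m := by lia
        rw [confluentNode, Sum.elim_inl, eval_confluentProductPolynomial,
          coeff_confluentProduct_neg_natCast_of_lt c h2i]
        simp [ascPochhammer_eval_neg_coe_nat_of_lt hi]
      · rw [two_mul, eval_ascPochhammer_add] at hc
        have hci := left_ne_zero_of_mul hc
        have hcii := right_ne_zero_of_mul hc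
        have hi_factorial : (i ! : K) ≠ 0 := Nat.cast_ne_zero.mpr i.factorial_ne_zero
        rw [confluentNode, Sum.elim_inl, eval_confluentProductPolynomial,
          coeff_two_mul_confluentProduct_neg_natCast]
        simp only [Polynomial.eval_mul, Polynomial.eval_C, Polynomial.eval_comp,
          Polynomial.eval_sub, Polynomial.eval_X, sub_neg_eq_add, eval_ascPochhammer_neg_self,
          two_mul, eval_ascPochhammer_add]
        field_simp
    · have hj : j < m := by simpa only [inr_mem_disjSum, mem_range] using hij
      have h2j : 2 * j < 2 * m := by lia
      rw [confluentNode, Sum.elim_inr, eval_confluentProductPolynomial,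
        coeff_confluentProduct_add_natCast_of_lt hc h2j]
      simp [ascPochhammer_eval_neg_coe_nat_of_lt hj]

theorem coeff_two_mul_confluentProduct {a c : K} {m : ℕ}
    (hc : (ascPochhammer K (2 * m)).eval c ≠ 0) :
    coeff (2 * m) (confluentProduct a c) =
      (ascPochhammer K m).eval a * (ascPochhammer K m).eval (c - a) /
        ((ascPochhammer K (2 * m)).eval c * (m ! * (ascPochhammer K m).eval c)) := by
  rw [← eval_confluentProductPolynomial, confluentProductPolynomial_two_mul hc]
  simp [div_eq_inv_mul]

theorem sum_choose_mul_ascPochhammer_eq_factorial_mul_coeff (n : ℕ) (a c : K) :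
    ∑ k ∈ range (n + 1), (-1) ^ k * (n.choose k : K) *
        ((ascPochhammer K k).eval a * (ascPochhammer K (n - k)).eval a) /
          ((ascPochhammer K k).eval c * (ascPochhammer K (n - k)).eval c) =
      n ! * coeff n (confluentProduct a c) := by
  rw [coeff_confluentProduct, Nat.sum_antidiagonal_eq_sum_range_succ_mk, mul_sum]
  refine sum_congr rfl fun k hk ↦ ?_
  rw [Nat.cast_choose K (mem_range_succ_iff.mp hk), coeff_confluentSeries, coeff_confluentSeries]
  ring

theorem stmt_9_general (n : ℕ) (a c : K) (hc : (ascPochhammer K n).eval c ≠ 0) :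
    ∑ k ∈ range (n + 1), (-1) ^ k * (n.choose k : K) *
        ((ascPochhammer K k).eval a * (ascPochhammer K (n - k)).eval a) /
          ((ascPochhammer K k).eval c * (ascPochhammer K (n - k)).eval c) =
      (if Even n then 1 else 0) * (n ! / (ascPochhammer K n).eval c) *
        ((ascPochhammer K (n / 2)).eval a * (ascPochhammer K (n / 2)).eval (c - a) /
          ((ascPochhammer K (n / 2)).eval 1 * (ascPochhammer K (n / 2)).eval c)) := by
  rw [sum_choose_mul_ascPochhammer_eq_factorial_mul_coeff]
  rcases n.even_or_odd with heven | hodd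
  · obtain ⟨m, rfl⟩ := even_iff_exists_two_mul.mp heven
    rw [coeff_two_mul_confluentProduct hc, if_pos heven, one_mul,
      Nat.mul_div_cancel_left m two_pos, ascPochhammer_eval_one]
    ring
  · rw [coeff_confluentProduct_of_odd a c hodd, if_neg (Nat.not_even_iff_odd.mpr hodd)]
    simp only [mul_zero, zero_mul]

end ConfluentSeries

theorem poch_eq_eval_ascPochhammer (x : ℝ) (n : ℕ) : poch x n = (ascPochhammer ℝ n).eval x := by
  induction n with
  | zero => simp [poch]
  | succ n ih => rw [ascPochhammer_succ_eval, ← ih, poch, Finset.prod_range_succ, poch]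

/-- Proposition 5: binomial convolution formula extracted from Bailey's
product formula for `₁F₁(a; c; x) · ₁F₁(a; c; -x)`. -/
theorem stmt_9 (n : ℕ) (a c : ℝ) (hc : poch c n ≠ 0) :
    ∑ k ∈ Finset.range (n + 1),
        (-1 : ℝ) ^ k * (n.choose k : ℝ) * (poch a k * poch a (n - k)) /
          (poch c k * poch c (n - k))
      = (if Even n then 1 else 0) * ((n.factorial : ℝ) / poch c n) *
          (poch a (n / 2) * poch (c - a) (n / 2) / (poch 1 (n / 2) * poch c (n / 2))) := by
  simp only [poch_eq_eval_ascPochhammer] at hc ⊢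
  exact stmt_9_general n a c hc
end
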